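/- arXiv:2002.07369 — 11 statements merged into one kernel-verified Lean document; each statement's English description precedes it below -/
import Mathlib

section
/- In the Coxeter group W of type E6, for all integers i with 1 ≤ i ≤ 3, the identity x'_{5,i} · x_{4,i} = x4 · x'_{5,i} · x_{4,i+1} holds. -/
/-- The descending product `x i * x (i-1) * ... * x j` (equal to `1` when `j > i`). -/
def descProd {G : Type*} [Group G] (x : ℤ → G) (i j : ℤ) : G :=
  ((List.range (i + 1 - j).toNat).map (fun n => x (i - (n : ℤ)))).prod

/-- The product `x i * x (i-2) * x (i-3) * ... * x j`, with the conventions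
`primProd x i (i-1) = x i` and `primProd x i j = 1` for `j ≥ i`. -/
def primProd {G : Type*} [Group G] (x : ℤ → G) (i j : ℤ) : G :=
  if i ≤ j then 1 else x i * descProd x (i - 2) j

theorem E6_beta1 (G : Type*) [Group G] (x : ℤ → G)
    (hsq : ∀ i : ℤ, 1 ≤ i → i ≤ 6 → x i ^ 2 = 1)
    (hbraid : ∀ i : ℤ, 1 ≤ i → i ≤ 3 → x (i+1) * x i * x (i+1) = x i * x (i+1) * x i)
    (h53 : x 5 * x 3 * x 5 = x 3 * x 5 * x 3)
    (h64 : x 6 * x 4 * x 6 = x 4 * x 6 * x 4)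
    (hcomm : ∀ i j : ℤ, 1 ≤ j → j + 1 < i → i ≤ 4 → x i * x j = x j * x i)
    (hcomm5 : ∀ i : ℤ, 1 ≤ i → i ≤ 6 → i ≠ 3 → i ≠ 5 → x 5 * x i = x i * x 5)
    (hcomm6 : ∀ i : ℤ, 1 ≤ i → i ≤ 6 → i ≠ 4 → i ≠ 6 → x 6 * x i = x i * x 6) :
    ∀ i : ℤ, 1 ≤ i → i ≤ 3 →
      primProd x 5 i * descProd x 4 i = x 4 * primProd x 5 i * descProd x 4 (i+1) := by
  have b1 := hbraid 1 (by norm_num) (by norm_num)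
  have b2 := hbraid 2 (by norm_num) (by norm_num)
  have b3 := hbraid 3 (by norm_num) (by norm_num)
  have c31 := hcomm 3 1 (by norm_num) (by norm_num) (by norm_num)
  have c41 := hcomm 4 1 (by norm_num) (by norm_num) (by norm_num)
  have c42 := hcomm 4 2 (by norm_num) (by norm_num) (by norm_num)
  have c54 := hcomm5 4 (by norm_num) (by norm_num) (by norm_num) (by norm_num)
  norm_num at b1 b2 b3
  intro i h1 h3
  have hi : i = 1 ∨ i = 2 ∨ i = 3 := by omega
  rcases hi with rfl | rfl | rfl
  · have e : primProd x 5 1 * descProd x 4 1 = x 5 * x 3 * x 2 * x 1 * (x 4 * x 3 * x 2 * x 1) := by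
      simp [primProd, descProd, List.range_succ, mul_assoc]
    have e' : x 4 * primProd x 5 1 * descProd x 4 (1+1)
        = x 4 * (x 5 * x 3 * x 2 * x 1) * (x 4 * x 3 * x 2) := by
      simp [primProd, descProd, List.range_succ, mul_assoc]
    rw [e, e']
    calc _ = x 5 * x 3 * x 2 * (x 4 * x 1) * x 3 * x 2 * x 1 := by rw [c41]; group
      _ = x 5 * x 3 * (x 4 * x 2) * (x 3 * x 1) * x 2 * x 1 := by rw [c42, c31]; group
      _ = x 5 * x 3 * x 4 * x 2 * x 3 * (x 2 * x 1 * x 2) := by rw [b1]; group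
      _ = x 5 * x 3 * x 4 * (x 3 * x 2 * x 3) * x 1 * x 2 := by rw [b2]; group
      _ = x 5 * (x 4 * x 3 * x 4) * x 2 * x 3 * x 1 * x 2 := by rw [b3]; group
      _ = (x 5 * x 4) * x 3 * (x 4 * x 2) * (x 3 * x 1) * x 2 := by group
      _ = x 4 * x 5 * x 3 * x 2 * (x 4 * x 1) * x 3 * x 2 := by rw [c54, c42, c31]; group
      _ = _ := by rw [c41]; group
  · have e : primProd x 5 2 * descProd x 4 2 = x 5 * x 3 * x 2 * (x 4 * x 3 * x 2) := by
      simp [primProd, descProd, List.range_succ, mul_assoc]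
    have e' : x 4 * primProd x 5 2 * descProd x 4 (2+1)
        = x 4 * (x 5 * x 3 * x 2) * (x 4 * x 3) := by
      simp [primProd, descProd, List.range_succ, mul_assoc]
    rw [e, e']
    calc _ = x 5 * x 3 * (x 4 * x 2) * x 3 * x 2 := by rw [c42]; group
      _ = x 5 * x 3 * x 4 * (x 3 * x 2 * x 3) := by rw [b2]; group
      _ = x 5 * (x 4 * x 3 * x 4) * x 2 * x 3 := by rw [b3]; group
      _ = (x 5 * x 4) * x 3 * (x 4 * x 2) * x 3 := by group
      _ = _ := by rw [c54, c42]; group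
  · have e : primProd x 5 3 * descProd x 4 3 = x 5 * x 3 * (x 4 * x 3) := by
      simp [primProd, descProd, List.range_succ, mul_assoc]
    have e' : x 4 * primProd x 5 3 * descProd x 4 (3+1) = x 4 * (x 5 * x 3) * x 4 := by
      simp [primProd, descProd, List.range_succ, mul_assoc]
    rw [e, e']
    calc _ = x 5 * (x 4 * x 3 * x 4) := by rw [b3]; group
      _ = (x 5 * x 4) * x 3 * x 4 := by group
      _ = _ := by rw [c54]; group
end

section
/- In the Coxeter group W of type E6, for all integers i with 1 ≤ i ≤ 3, the identity x'_{5,i} · x4 · x5 = x3 · x'_{5,i} · x4 holds. -/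
theorem E6_beta2 (G : Type*) [Group G] (x : ℤ → G)
    (hsq : ∀ i : ℤ, 1 ≤ i → i ≤ 6 → x i ^ 2 = 1)
    (hbraid : ∀ i : ℤ, 1 ≤ i → i ≤ 3 → x (i+1) * x i * x (i+1) = x i * x (i+1) * x i)
    (h53 : x 5 * x 3 * x 5 = x 3 * x 5 * x 3)
    (h64 : x 6 * x 4 * x 6 = x 4 * x 6 * x 4)
    (hcomm : ∀ i j : ℤ, 1 ≤ j → j + 1 < i → i ≤ 4 → x i * x j = x j * x i)
    (hcomm5 : ∀ i : ℤ, 1 ≤ i → i ≤ 6 → i ≠ 3 → i ≠ 5 → x 5 * x i = x i * x 5)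
    (hcomm6 : ∀ i : ℤ, 1 ≤ i → i ≤ 6 → i ≠ 4 → i ≠ 6 → x 6 * x i = x i * x 6) :
    ∀ i : ℤ, 1 ≤ i → i ≤ 3 →
      primProd x 5 i * x 4 * x 5 = x 3 * primProd x 5 i * x 4 := by
  intro i h1 h3
  have c4 : x 4 * x 5 = x 5 * x 4 := (hcomm5 4 (by norm_num) (by norm_num) (by norm_num) (by norm_num)).symm
  have c2 : x 2 * x 5 = x 5 * x 2 := (hcomm5 2 (by norm_num) (by norm_num) (by norm_num) (by norm_num)).symm
  have c1 : x 1 * x 5 = x 5 * x 1 := (hcomm5 1 (by norm_num) (by norm_num) (by norm_num) (by norm_num)).symm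
  have key : ∀ w : G, w * x 5 = x 5 * w →
      x 5 * (x 3 * w) * x 4 * x 5 = x 3 * (x 5 * (x 3 * w)) * x 4 := by
    intro w hw
    calc x 5 * (x 3 * w) * x 4 * x 5 = x 5 * x 3 * w * (x 4 * x 5) := by group
      _ = x 5 * x 3 * (w * x 5) * x 4 := by rw [c4]; group
      _ = (x 5 * x 3 * x 5) * w * x 4 := by rw [hw]; group
      _ = _ := by rw [h53]; group
  have e3 : primProd x 5 3 = x 5 * (x 3 * 1) := by
    simp [primProd, descProd, List.range_succ]
  have e2 : primProd x 5 2 = x 5 * (x 3 * x 2) := by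
    simp [primProd, descProd, List.range_succ]
  have e1 : primProd x 5 1 = x 5 * (x 3 * (x 2 * x 1)) := by
    simp [primProd, descProd, List.range_succ, mul_assoc]
  have h : i = 1 ∨ i = 2 ∨ i = 3 := by omega
  rcases h with rfl | rfl | rfl
  · rw [e1]
    exact key _ (by rw [mul_assoc, c1, ← mul_assoc, c2, mul_assoc])
  · rw [e2]
    exact key _ c2
  · rw [e3]
    exact key _ (by simp)
end

section
/- In the Coxeter group W of type E6, for all integers i, j with 1 ≤ i < j ≤ 3, the identity x'_{5,i} · x_{4,j} · x'_{5,j} = x3 · x'_{5,i} · x_{4,j} · x'_{5,j+1} holds. -/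
theorem key_aux {G : Type*} [Group G] (a c m : G) (h : a * c * a = c * a * c)
    (hm : a * m = m * a) : a * c * m * c * a * c = c * a * c * m * c * a := by
  calc a * c * m * c * a * c = a * c * m * (c * a * c) := by group
    _ = a * c * (m * a) * c * a := by rw [← h]; group
    _ = (a * c * a) * m * c * a := by rw [← hm]; group
    _ = c * a * c * m * c * a := by rw [h]

theorem E6_beta3 (G : Type*) [Group G] (x : ℤ → G)
    (hsq : ∀ i : ℤ, 1 ≤ i → i ≤ 6 → x i ^ 2 = 1)
    (hbraid : ∀ i : ℤ, 1 ≤ i → i ≤ 3 → x (i+1) * x i * x (i+1) = x i * x (i+1) * x i)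
    (h53 : x 5 * x 3 * x 5 = x 3 * x 5 * x 3)
    (h64 : x 6 * x 4 * x 6 = x 4 * x 6 * x 4)
    (hcomm : ∀ i j : ℤ, 1 ≤ j → j + 1 < i → i ≤ 4 → x i * x j = x j * x i)
    (hcomm5 : ∀ i : ℤ, 1 ≤ i → i ≤ 6 → i ≠ 3 → i ≠ 5 → x 5 * x i = x i * x 5)
    (hcomm6 : ∀ i : ℤ, 1 ≤ i → i ≤ 6 → i ≠ 4 → i ≠ 6 → x 6 * x i = x i * x 6) :
    ∀ i j : ℤ, 1 ≤ i → i < j → j ≤ 3 →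
      primProd x 5 i * descProd x 4 j * primProd x 5 j = x 3 * primProd x 5 i * descProd x 4 j * primProd x 5 (j+1) := by
  intro i j hi hij hj
  have c51 := hcomm5 1 (by norm_num) (by norm_num) (by norm_num) (by norm_num)
  have c52 := hcomm5 2 (by norm_num) (by norm_num) (by norm_num) (by norm_num)
  have c54 := hcomm5 4 (by norm_num) (by norm_num) (by norm_num) (by norm_num)
  have b32 : x 3 * x 2 * x 3 = x 2 * x 3 * x 2 := hbraid 2 (by norm_num) (by norm_num)
  have m24 : x 5 * (x 2 * x 4) = x 2 * x 4 * x 5 :=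
    Commute.mul_right (a := x 5) c52 c54
  have m214 : x 5 * (x 2 * x 1 * x 4) = x 2 * x 1 * x 4 * x 5 :=
    Commute.mul_right (a := x 5) (Commute.mul_right (a := x 5) c52 c51) c54
  have k1 := key_aux (x 5) (x 3) _ h53 m24
  have k2 := key_aux (x 5) (x 3) _ h53 m214
  have p1 : primProd x 5 1 = x 5 * (x 3 * (x 2 * x 1)) := by
    simp [primProd, descProd, List.range_succ, mul_assoc]
  have p2 : primProd x 5 2 = x 5 * (x 3 * x 2) := by
    simp [primProd, descProd, List.range_succ]
  have p3 : primProd x 5 3 = x 5 * x 3 := by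
    simp [primProd, descProd]
  have p4 : primProd x 5 4 = x 5 := by
    simp [primProd, descProd]
  have d2 : descProd x 4 2 = x 4 * (x 3 * x 2) := by
    simp [descProd, List.range_succ, mul_assoc]
  have d3 : descProd x 4 3 = x 4 * x 3 := by
    simp [descProd, List.range_succ]
  have hc : (i = 1 ∧ j = 2) ∨ (i = 1 ∧ j = 3) ∨ (i = 2 ∧ j = 3) := by omega
  rcases hc with ⟨rfl, rfl⟩ | ⟨rfl, rfl⟩ | ⟨rfl, rfl⟩
  · rw [show (2 : ℤ) + 1 = 3 by norm_num, p1, p2, p3, d2]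
    calc x 5 * (x 3 * (x 2 * x 1)) * (x 4 * (x 3 * x 2)) * (x 5 * (x 3 * x 2))
        = x 5 * x 3 * x 2 * x 1 * x 4 * x 3 * (x 2 * x 5) * x 3 * x 2 := by
          simp only [mul_assoc]
      _ = x 5 * x 3 * x 2 * x 1 * x 4 * x 3 * x 5 * (x 2 * x 3 * x 2) := by
          rw [← c52]; simp only [mul_assoc]
      _ = x 5 * x 3 * (x 2 * x 1 * x 4) * x 3 * x 5 * x 3 * (x 2 * x 3) := by
          rw [← b32]; simp only [mul_assoc]
      _ = x 3 * x 5 * x 3 * x 2 * x 1 * x 4 * x 3 * (x 5 * x 2) * x 3 := by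
          rw [k2]; simp only [mul_assoc]
      _ = _ := by rw [c52]; simp only [mul_assoc]
  · rw [show (3 : ℤ) + 1 = 4 by norm_num, p1, p3, p4, d3]
    simpa only [mul_assoc] using k2
  · rw [show (3 : ℤ) + 1 = 4 by norm_num, p2, p3, p4, d3]
    simpa only [mul_assoc] using k1
end

section
/- In the Coxeter group W of type E6, for all integers i with 1 ≤ i ≤ 4, the identity x'_{6,i} · x'_{5,i} = x5 · x'_{6,i} · x'_{5,i+1} holds. -/
theorem E6_aux2 {G : Type*} [Group G] {b c e : G} (h53 : e * c * e = c * e * c)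
    (h32 : c * b * c = b * c * b) (h52 : e * b = b * e) :
    c * b * e * c * b = e * c * b * e * c := by
  calc c * b * e * c * b = c * (b * e) * c * b := by group
    _ = c * e * (b * c * b) := by rw [← h52]; group
    _ = (c * e * c) * b * c := by rw [← h32]; group
    _ = e * c * (e * b) * c := by rw [← h53]; group
    _ = e * c * b * e * c := by rw [h52]; group

theorem E6_aux1 {G : Type*} [Group G] {a b c e : G} (h53 : e * c * e = c * e * c)
    (h32 : c * b * c = b * c * b) (h21 : b * a * b = a * b * a) (h52 : e * b = b * e)
    (h51 : e * a = a * e) (h31 : c * a = a * c) :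
    c * b * a * e * c * b * a = e * c * b * a * e * c * b := by
  calc c * b * a * e * c * b * a = c * b * (a * e) * c * b * a := by group
    _ = c * b * e * (a * c) * b * a := by rw [← h51]; group
    _ = c * b * e * c * (a * b * a) := by rw [← h31]; group
    _ = (c * b * e * c * b) * a * b := by rw [← h21]; group
    _ = e * c * b * e * (c * a) * b := by rw [E6_aux2 h53 h32 h52]; group
    _ = e * c * b * (e * a) * c * b := by rw [h31]; group
    _ = e * c * b * a * e * c * b := by rw [h51]; group

theorem E6_eta (G : Type*) [Group G] (x : ℤ → G)
    (hsq : ∀ i : ℤ, 1 ≤ i → i ≤ 6 → x i ^ 2 = 1)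
    (hbraid : ∀ i : ℤ, 1 ≤ i → i ≤ 3 → x (i+1) * x i * x (i+1) = x i * x (i+1) * x i)
    (h53 : x 5 * x 3 * x 5 = x 3 * x 5 * x 3)
    (h64 : x 6 * x 4 * x 6 = x 4 * x 6 * x 4)
    (hcomm : ∀ i j : ℤ, 1 ≤ j → j + 1 < i → i ≤ 4 → x i * x j = x j * x i)
    (hcomm5 : ∀ i : ℤ, 1 ≤ i → i ≤ 6 → i ≠ 3 → i ≠ 5 → x 5 * x i = x i * x 5)
    (hcomm6 : ∀ i : ℤ, 1 ≤ i → i ≤ 6 → i ≠ 4 → i ≠ 6 → x 6 * x i = x i * x 6) :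
    ∀ i : ℤ, 1 ≤ i → i ≤ 4 →
      primProd x 6 i * primProd x 5 i = x 5 * primProd x 6 i * primProd x 5 (i+1) := by
  intro i h1 h4
  have h32 := hbraid 2 (by norm_num) (by norm_num)
  have h21 := hbraid 1 (by norm_num) (by norm_num)
  norm_num at h32 h21
  have h31 := hcomm 3 1 (by norm_num) (by norm_num) (by norm_num)
  have h51 := hcomm5 1 (by norm_num) (by norm_num) (by norm_num) (by norm_num)
  have h52 := hcomm5 2 (by norm_num) (by norm_num) (by norm_num) (by norm_num)
  have h54 := hcomm5 4 (by norm_num) (by norm_num) (by norm_num) (by norm_num)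
  have h56 := hcomm5 6 (by norm_num) (by norm_num) (by norm_num) (by norm_num)
  have key : ∀ y z : G, y = x 5 * z → x 6 * x 4 * y = x 5 * (x 6 * x 4 * z) := by
    rintro y z rfl
    simp only [← mul_assoc]
    rw [h56, mul_assoc (x 6) (x 5), h54]
    simp only [← mul_assoc]
  interval_cases i
  · have := key _ _ ((E6_aux1 h53 h32 h21 h52 h51 h31).trans (by simp only [mul_assoc]; rfl))
    simpa [primProd, descProd, List.range_succ, mul_assoc] using this
  · have := key _ _ ((E6_aux2 h53 h32 h52).trans (by simp only [mul_assoc]; rfl))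
    simpa [primProd, descProd, List.range_succ, mul_assoc] using this
  · have := key _ _ (h53.symm.trans (by simp only [mul_assoc]; rfl))
    simpa [primProd, descProd, List.range_succ, mul_assoc] using this
  · have := key (x 5) 1 (by simp)
    simpa [primProd, descProd, List.range_succ, mul_assoc] using this
end

section
/- In the Coxeter group W of type E6, for all integers i, j with 1 ≤ i < j ≤ 5, the identity x'_{6,i} · x'_{5,j} · x6 = x4 · x'_{6,i} · x'_{5,j} holds. -/
theorem E6_xi (G : Type*) [Group G] (x : ℤ → G)
    (hsq : ∀ i : ℤ, 1 ≤ i → i ≤ 6 → x i ^ 2 = 1)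
    (hbraid : ∀ i : ℤ, 1 ≤ i → i ≤ 3 → x (i+1) * x i * x (i+1) = x i * x (i+1) * x i)
    (h53 : x 5 * x 3 * x 5 = x 3 * x 5 * x 3)
    (h64 : x 6 * x 4 * x 6 = x 4 * x 6 * x 4)
    (hcomm : ∀ i j : ℤ, 1 ≤ j → j + 1 < i → i ≤ 4 → x i * x j = x j * x i)
    (hcomm5 : ∀ i : ℤ, 1 ≤ i → i ≤ 6 → i ≠ 3 → i ≠ 5 → x 5 * x i = x i * x 5)
    (hcomm6 : ∀ i : ℤ, 1 ≤ i → i ≤ 6 → i ≠ 4 → i ≠ 6 → x 6 * x i = x i * x 6) :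
    ∀ i j : ℤ, 1 ≤ i → i < j → j ≤ 5 →
      primProd x 6 i * primProd x 5 j * x 6 = x 4 * primProd x 6 i * primProd x 5 j := by
  have c1 := hcomm6 1 (by norm_num) (by norm_num) (by norm_num) (by norm_num)
  have c2 := hcomm6 2 (by norm_num) (by norm_num) (by norm_num) (by norm_num)
  have c3 := hcomm6 3 (by norm_num) (by norm_num) (by norm_num) (by norm_num)
  have c5 := hcomm6 5 (by norm_num) (by norm_num) (by norm_num) (by norm_num)
  have e : ∀ a : G, x 6 * a = a * x 6 → ∀ z, a * (x 6 * z) = x 6 * (a * z) := by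
    intro a h z
    rw [← mul_assoc, ← h, mul_assoc]
  have k4 : ∀ z, x 6 * (x 4 * (x 6 * z)) = x 4 * (x 6 * (x 4 * z)) := by
    intro z
    simpa only [mul_assoc] using congrArg (· * z) h64
  have h64' : x 6 * (x 4 * x 6) = x 4 * (x 6 * x 4) := by simpa only [mul_assoc] using h64
  have d1 := e _ c1
  have d2 := e _ c2
  have d3 := e _ c3
  have d5 := e _ c5
  intro i j hi hij hj
  have hi4 : i ≤ 4 := by omega
  interval_cases i <;> interval_cases j <;>
    simp [primProd, descProd, List.range_succ, mul_assoc, ← c1, ← c2, ← c3, ← c5,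
      d1, d2, d3, d5, k4, h64']
end

section
/- In the Coxeter group W of type E6, for all integers i, j, k with 1 ≤ i < j < k ≤ 4, the identity x'_{6,i} · x'_{5,j} · x_{4,k} · x'_{6,k} = x4 · x'_{6,i} · x'_{5,j} · x_{4,k} · x'_{6,k+1} holds. -/
theorem E6_lambda (G : Type*) [Group G] (x : ℤ → G)
    (hsq : ∀ i : ℤ, 1 ≤ i → i ≤ 6 → x i ^ 2 = 1)
    (hbraid : ∀ i : ℤ, 1 ≤ i → i ≤ 3 → x (i+1) * x i * x (i+1) = x i * x (i+1) * x i)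
    (h53 : x 5 * x 3 * x 5 = x 3 * x 5 * x 3)
    (h64 : x 6 * x 4 * x 6 = x 4 * x 6 * x 4)
    (hcomm : ∀ i j : ℤ, 1 ≤ j → j + 1 < i → i ≤ 4 → x i * x j = x j * x i)
    (hcomm5 : ∀ i : ℤ, 1 ≤ i → i ≤ 6 → i ≠ 3 → i ≠ 5 → x 5 * x i = x i * x 5)
    (hcomm6 : ∀ i : ℤ, 1 ≤ i → i ≤ 6 → i ≠ 4 → i ≠ 6 → x 6 * x i = x i * x 6) :
    ∀ i j k : ℤ, 1 ≤ i → i < j → j < k → k ≤ 4 →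
      primProd x 6 i * primProd x 5 j * descProd x 4 k * primProd x 6 k =
      x 4 * primProd x 6 i * primProd x 5 j * descProd x 4 k * primProd x 6 (k+1) := by
  have c1 : Commute (x 6) (x 1) := hcomm6 1 (by norm_num) (by norm_num) (by norm_num) (by norm_num)
  have c2 : Commute (x 6) (x 2) := hcomm6 2 (by norm_num) (by norm_num) (by norm_num) (by norm_num)
  have c3 : Commute (x 6) (x 3) := hcomm6 3 (by norm_num) (by norm_num) (by norm_num) (by norm_num)
  have c5 : Commute (x 6) (x 5) := hcomm6 5 (by norm_num) (by norm_num) (by norm_num) (by norm_num)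
  have b43 : x 4 * x 3 * x 4 = x 3 * x 4 * x 3 := by
    simpa using hbraid 3 (by norm_num) (by norm_num)
  have key : ∀ A : G, Commute (x 6) A →
      x 6 * x 4 * A * (x 4 * x 6 * x 4) = x 4 * (x 6 * x 4 * A) * (x 4 * x 6) := by
    intro A hA
    calc x 6 * x 4 * A * (x 4 * x 6 * x 4) = x 6 * x 4 * A * (x 6 * x 4 * x 6) := by rw [h64]
      _ = x 6 * x 4 * (A * x 6) * (x 4 * x 6) := by group
      _ = (x 6 * x 4 * x 6) * A * (x 4 * x 6) := by rw [← hA.eq]; group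
      _ = x 4 * (x 6 * x 4 * A) * (x 4 * x 6) := by rw [h64]; group
  have key3 : ∀ A : G, Commute (x 6) A →
      x 6 * x 4 * A * (x 4 * x 3 * (x 6 * x 4 * x 3)) =
        x 4 * (x 6 * x 4 * A) * (x 4 * x 3 * (x 6 * x 4)) := by
    intro A hA
    calc x 6 * x 4 * A * (x 4 * x 3 * (x 6 * x 4 * x 3))
        = x 6 * x 4 * A * (x 4 * (x 3 * x 6) * x 4 * x 3) := by group
      _ = x 6 * x 4 * A * (x 4 * x 6 * (x 3 * x 4 * x 3)) := by rw [← c3.eq]; group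
      _ = x 6 * x 4 * A * (x 4 * x 6 * x 4) * (x 3 * x 4) := by rw [← b43]; group
      _ = x 4 * (x 6 * x 4 * A) * (x 4 * (x 6 * x 3) * x 4) := by rw [key A hA]; group
      _ = x 4 * (x 6 * x 4 * A) * (x 4 * x 3 * (x 6 * x 4)) := by rw [c3.eq]; group
  intro i j k hi hij hjk hk
  have hcases : (i = 1 ∧ j = 2 ∧ k = 3) ∨ (i = 1 ∧ j = 2 ∧ k = 4) ∨ (i = 1 ∧ j = 3 ∧ k = 4) ∨
      (i = 2 ∧ j = 3 ∧ k = 4) := by omega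
  rcases hcases with ⟨rfl, rfl, rfl⟩ | ⟨rfl, rfl, rfl⟩ | ⟨rfl, rfl, rfl⟩ | ⟨rfl, rfl, rfl⟩
  · have := key3 (x 3 * x 2 * x 1 * x 5 * x 3 * x 2)
      (((((c3.mul_right c2).mul_right c1).mul_right c5).mul_right c3).mul_right c2)
    simpa [primProd, descProd, List.range_succ, mul_assoc] using this
  · have := key (x 3 * x 2 * x 1 * x 5 * x 3 * x 2)
      (((((c3.mul_right c2).mul_right c1).mul_right c5).mul_right c3).mul_right c2)
    simpa [primProd, descProd, List.range_succ, mul_assoc] using this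
  · have := key (x 3 * x 2 * x 1 * x 5 * x 3)
      ((((c3.mul_right c2).mul_right c1).mul_right c5).mul_right c3)
    simpa [primProd, descProd, List.range_succ, mul_assoc] using this
  · have := key (x 3 * x 2 * x 5 * x 3)
      (((c3.mul_right c2).mul_right c5).mul_right c3)
    simpa [primProd, descProd, List.range_succ, mul_assoc] using this
end

section
/- In the Coxeter group W of type E6, for every integer l with 1 ≤ l ≤ 3, the identity x'_{6,1} · x'_{5,2} · x_{4,3} · x5 · x'_{6,l} · x5 = x4 · x'_{6,1} · x'_{5,2} · x_{4,3} · x5 · x'_{6,l} holds. -/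
theorem E6_word {G : Type*} [Group G] (a1 a2 a3 a4 a5 a6 : G)
    (r16 : a1 * a6 = a6 * a1)
    (r26 : a2 * a6 = a6 * a2)
    (r343 : a3 * a4 * a3 = a4 * a3 * a4)
    (r36 : a3 * a6 = a6 * a3)
    (r45 : a4 * a5 = a5 * a4)
    (r464 : a4 * a6 * a4 = a6 * a4 * a6)
    (r535 : a5 * a3 * a5 = a3 * a5 * a3)
    (r54 : a5 * a4 = a4 * a5)
    (r56 : a5 * a6 = a6 * a5)
    (r63 : a6 * a3 = a3 * a6)
    (r646 : a6 * a4 * a6 = a4 * a6 * a4)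
    (r65 : a6 * a5 = a5 * a6)
    : a6 * a4 * a3 * a2 * a1 * a5 * a3 * a2 * a4 * a3 * a5 * a6 * a4 * a3 * a5 = a4 * a6 * a4 * a3 * a2 * a1 * a5 * a3 * a2 * a4 * a3 * a5 * a6 * a4 * a3 := by
  calc a6 * a4 * a3 * a2 * a1 * a5 * a3 * a2 * a4 * a3 * a5 * a6 * a4 * a3 * a5
    _ = a6 * a4 * a3 * a2 * a1 * a5 * a3 * a2 * a4 * a3 * (a5 * a6) * a4 * a3 * a5 := by simp only [mul_assoc]
    _ = a6 * a4 * a3 * a2 * a1 * a5 * a3 * a2 * a4 * a3 * a6 * a5 * a4 * a3 * a5 := by rw [r56]; simp only [mul_assoc]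
    _ = a6 * a4 * a3 * a2 * a1 * a5 * a3 * a2 * a4 * (a3 * a6) * a5 * a4 * a3 * a5 := by simp only [mul_assoc]
    _ = a6 * a4 * a3 * a2 * a1 * a5 * a3 * a2 * a4 * a6 * a3 * a5 * a4 * a3 * a5 := by rw [r36]; simp only [mul_assoc]
    _ = a6 * a4 * a3 * a2 * a1 * a5 * a3 * a2 * a4 * a6 * a3 * (a5 * a4) * a3 * a5 := by simp only [mul_assoc]
    _ = a6 * a4 * a3 * a2 * a1 * a5 * a3 * a2 * a4 * a6 * a3 * a4 * a5 * a3 * a5 := by rw [r54]; simp only [mul_assoc]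
    _ = a6 * a4 * a3 * a2 * a1 * a5 * a3 * a2 * a4 * a6 * a3 * a4 * (a5 * a3 * a5) := by simp only [mul_assoc]
    _ = a6 * a4 * a3 * a2 * a1 * a5 * a3 * a2 * a4 * a6 * a3 * a4 * a3 * a5 * a3 := by rw [r535]; simp only [mul_assoc]
    _ = a6 * a4 * a3 * a2 * a1 * a5 * a3 * a2 * a4 * a6 * (a3 * a4 * a3) * a5 * a3 := by simp only [mul_assoc]
    _ = a6 * a4 * a3 * a2 * a1 * a5 * a3 * a2 * a4 * a6 * a4 * a3 * a4 * a5 * a3 := by rw [r343]; simp only [mul_assoc]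
    _ = a6 * a4 * a3 * a2 * a1 * a5 * a3 * a2 * (a4 * a6 * a4) * a3 * a4 * a5 * a3 := by simp only [mul_assoc]
    _ = a6 * a4 * a3 * a2 * a1 * a5 * a3 * a2 * a6 * a4 * a6 * a3 * a4 * a5 * a3 := by rw [r464]; simp only [mul_assoc]
    _ = a6 * a4 * a3 * a2 * a1 * a5 * a3 * (a2 * a6) * a4 * a6 * a3 * a4 * a5 * a3 := by simp only [mul_assoc]
    _ = a6 * a4 * a3 * a2 * a1 * a5 * a3 * a6 * a2 * a4 * a6 * a3 * a4 * a5 * a3 := by rw [r26]; simp only [mul_assoc]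
    _ = a6 * a4 * a3 * a2 * a1 * a5 * (a3 * a6) * a2 * a4 * a6 * a3 * a4 * a5 * a3 := by simp only [mul_assoc]
    _ = a6 * a4 * a3 * a2 * a1 * a5 * a6 * a3 * a2 * a4 * a6 * a3 * a4 * a5 * a3 := by rw [r36]; simp only [mul_assoc]
    _ = a6 * a4 * a3 * a2 * a1 * (a5 * a6) * a3 * a2 * a4 * a6 * a3 * a4 * a5 * a3 := by simp only [mul_assoc]
    _ = a6 * a4 * a3 * a2 * a1 * a6 * a5 * a3 * a2 * a4 * a6 * a3 * a4 * a5 * a3 := by rw [r56]; simp only [mul_assoc]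
    _ = a6 * a4 * a3 * a2 * (a1 * a6) * a5 * a3 * a2 * a4 * a6 * a3 * a4 * a5 * a3 := by simp only [mul_assoc]
    _ = a6 * a4 * a3 * a2 * a6 * a1 * a5 * a3 * a2 * a4 * a6 * a3 * a4 * a5 * a3 := by rw [r16]; simp only [mul_assoc]
    _ = a6 * a4 * a3 * (a2 * a6) * a1 * a5 * a3 * a2 * a4 * a6 * a3 * a4 * a5 * a3 := by simp only [mul_assoc]
    _ = a6 * a4 * a3 * a6 * a2 * a1 * a5 * a3 * a2 * a4 * a6 * a3 * a4 * a5 * a3 := by rw [r26]; simp only [mul_assoc]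
    _ = a6 * a4 * (a3 * a6) * a2 * a1 * a5 * a3 * a2 * a4 * a6 * a3 * a4 * a5 * a3 := by simp only [mul_assoc]
    _ = a6 * a4 * a6 * a3 * a2 * a1 * a5 * a3 * a2 * a4 * a6 * a3 * a4 * a5 * a3 := by rw [r36]; simp only [mul_assoc]
    _ = a4 * a6 * a4 * a3 * a2 * a1 * a5 * a3 * a2 * a4 * a6 * a3 * a4 * a5 * a3 := by rw [r646]
    _ = a4 * a6 * a4 * a3 * a2 * a1 * a5 * a3 * a2 * a4 * (a6 * a3) * a4 * a5 * a3 := by simp only [mul_assoc]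
    _ = a4 * a6 * a4 * a3 * a2 * a1 * a5 * a3 * a2 * a4 * a3 * a6 * a4 * a5 * a3 := by rw [r63]; simp only [mul_assoc]
    _ = a4 * a6 * a4 * a3 * a2 * a1 * a5 * a3 * a2 * a4 * a3 * a6 * (a4 * a5) * a3 := by simp only [mul_assoc]
    _ = a4 * a6 * a4 * a3 * a2 * a1 * a5 * a3 * a2 * a4 * a3 * a6 * a5 * a4 * a3 := by rw [r45]; simp only [mul_assoc]
    _ = a4 * a6 * a4 * a3 * a2 * a1 * a5 * a3 * a2 * a4 * a3 * (a6 * a5) * a4 * a3 := by simp only [mul_assoc]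
    _ = a4 * a6 * a4 * a3 * a2 * a1 * a5 * a3 * a2 * a4 * a3 * a5 * a6 * a4 * a3 := by rw [r65]; simp only [mul_assoc]

theorem E6_nu (G : Type*) [Group G] (x : ℤ → G)
    (hsq : ∀ i : ℤ, 1 ≤ i → i ≤ 6 → x i ^ 2 = 1)
    (hbraid : ∀ i : ℤ, 1 ≤ i → i ≤ 3 → x (i+1) * x i * x (i+1) = x i * x (i+1) * x i)
    (h53 : x 5 * x 3 * x 5 = x 3 * x 5 * x 3)
    (h64 : x 6 * x 4 * x 6 = x 4 * x 6 * x 4)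
    (hcomm : ∀ i j : ℤ, 1 ≤ j → j + 1 < i → i ≤ 4 → x i * x j = x j * x i)
    (hcomm5 : ∀ i : ℤ, 1 ≤ i → i ≤ 6 → i ≠ 3 → i ≠ 5 → x 5 * x i = x i * x 5)
    (hcomm6 : ∀ i : ℤ, 1 ≤ i → i ≤ 6 → i ≠ 4 → i ≠ 6 → x 6 * x i = x i * x 6) :
    ∀ l : ℤ, 1 ≤ l → l ≤ 3 →
      primProd x 6 1 * primProd x 5 2 * descProd x 4 3 * x 5 * primProd x 6 l * x 5 =
      x 4 * primProd x 6 1 * primProd x 5 2 * descProd x 4 3 * x 5 * primProd x 6 l := by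
  have key := E6_word (x 1) (x 2) (x 3) (x 4) (x 5) (x 6)
    ((hcomm6 1 (by norm_num) (by norm_num) (by norm_num) (by norm_num)).symm)
    ((hcomm6 2 (by norm_num) (by norm_num) (by norm_num) (by norm_num)).symm)
    ((hbraid 3 (by norm_num) (by norm_num)).symm)
    ((hcomm6 3 (by norm_num) (by norm_num) (by norm_num) (by norm_num)).symm)
    ((hcomm5 4 (by norm_num) (by norm_num) (by norm_num) (by norm_num)).symm)
    (h64.symm)
    (h53)
    ((hcomm5 4 (by norm_num) (by norm_num) (by norm_num) (by norm_num)))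
    ((hcomm6 5 (by norm_num) (by norm_num) (by norm_num) (by norm_num)).symm)
    ((hcomm6 3 (by norm_num) (by norm_num) (by norm_num) (by norm_num)))
    (h64)
    ((hcomm6 5 (by norm_num) (by norm_num) (by norm_num) (by norm_num)))
  have c1 : x 1 * x 5 = x 5 * x 1 := (hcomm5 1 (by norm_num) (by norm_num) (by norm_num) (by norm_num)).symm
  have c2 : x 2 * x 5 = x 5 * x 2 := (hcomm5 2 (by norm_num) (by norm_num) (by norm_num) (by norm_num)).symm
  intro l h1 h3
  have e1 : primProd x 6 1 = x 6 * x 4 * x 3 * x 2 * x 1 := by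
    simp [primProd, descProd, List.range_succ, mul_assoc]
  have e2 : primProd x 6 2 = x 6 * x 4 * x 3 * x 2 := by
    simp [primProd, descProd, List.range_succ, mul_assoc]
  have e3 : primProd x 6 3 = x 6 * x 4 * x 3 := by
    simp [primProd, descProd, List.range_succ, mul_assoc]
  have e4 : primProd x 5 2 = x 5 * x 3 * x 2 := by
    simp [primProd, descProd, List.range_succ, mul_assoc]
  have e5 : descProd x 4 3 = x 4 * x 3 := by
    simp [descProd, List.range_succ]
  have hl : l = 1 ∨ l = 2 ∨ l = 3 := by omega
  rcases hl with rfl | rfl | rfl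
  · have k := congrArg (· * (x 2 * x 1)) key
    simp only [mul_assoc] at k
    simp only [e1, e4, e5, mul_assoc]
    rw [c1, ← mul_assoc (x 2) (x 5), c2]
    simpa only [mul_assoc] using k
  · have k := congrArg (· * x 2) key
    simp only [mul_assoc] at k
    simp only [e1, e2, e4, e5, mul_assoc]
    rw [c2]
    exact k
  · simp only [e1, e3, e4, e5, mul_assoc]
    simpa only [mul_assoc] using key
end

section
/- In the Coxeter group W of type E8, for all integers i, j, k, l, m, p with −1 ≤ i < j < k ≤ 2 and −1 ≤ l < m < p ≤ k+2, the identity x'_{6,i} · x'_{5,j} · x_{4,k} · x'_{5,3} · x4 · x'_{6,l} · x'_{5,m} · x_{4,p} · x'_{6,k+3} = x4 · x'_{6,i} · x'_{5,j} · x_{4,k} · x'_{5,3} · x4 · x'_{6,l} · x'_{5,m} · x_{4,p} · x'_{6,k+4} holds. -/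
theorem descProd_eq {G : Type*} [Group G] (x : ℤ → G) (i j : ℤ) :
    descProd x i j = ((List.range (i + 1 - j).toNat).map (fun n : ℕ => x (i - (n : ℤ)))).prod := by
  unfold descProd
  congr 1
  simp [List.map_flatMap]
  generalize List.range (i + 1 - j).toNat = L
  induction L with
  | nil => rfl
  | cons a L ih => simp [List.flatMap_cons, ih]

theorem descProd_step {G : Type*} [Group G] (x : ℤ → G) (i j : ℤ) (h : j ≤ i) :
    descProd x i j = x i * descProd x (i - 1) j := by
  rw [descProd_eq, descProd_eq]
  have e : (i + 1 - j).toNat = (i - 1 + 1 - j).toNat + 1 := by omega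
  rw [e, List.range_succ_eq_map, List.map_cons, List.prod_cons, List.map_map]
  congr 1
  · simp
  · congr 1
    apply List.map_congr_left
    intro n _
    show x (i - ((n + 1 : ℕ) : ℤ)) = x (i - 1 - (n : ℤ))
    congr 1
    push_cast
    ring

theorem descProd_nil {G : Type*} [Group G] (x : ℤ → G) (i j : ℤ) (h : i < j) :
    descProd x i j = 1 := by
  rw [descProd_eq]
  have e : (i + 1 - j).toNat = 0 := by omega
  rw [e]; simp

theorem comm_cj {G : Type*} [Group G] {s t r : G} (h : Commute s t) (h' : Commute s r) :
    Commute s (t * r * t) := (h.mul_right h').mul_right h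

/-- If `s, t` braid and `t` commutes with `r`, then `s` commutes with `t s r s t`. -/
theorem comm_braid {G : Type*} [Group G] {s t r : G}
    (h : s * t * s = t * s * t) (h' : Commute t r) :
    Commute s (t * (s * r * s) * t) := by
  have h1 : t * r = r * t := h'
  show s * (t * (s * r * s) * t) = t * (s * r * s) * t * s
  calc s * (t * (s * r * s) * t) = (s * t * s) * r * s * t := by simp only [mul_assoc]
    _ = t * s * (t * r) * s * t := by rw [h]; simp only [mul_assoc]
    _ = t * s * r * (t * s * t) := by rw [h1]; simp only [mul_assoc]
    _ = t * s * r * (s * t * s) := by rw [h]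
    _ = _ := by simp only [mul_assoc]

/-- Moving a reflection to the left past an involution. -/
theorem pushL {G : Type*} [Group G] {s t t' : G} (hs : s * s = 1) (h : t' = s * t * s) (z : G) :
    s * (t * z) = t' * (s * z) := by
  subst h
  simp only [mul_assoc]
  rw [← mul_assoc s s z, hs, one_mul]

/-- Moving a reflection to the right past an involution. -/
theorem pushR {G : Type*} [Group G] {s t t' : G} (hs : s * s = 1) (h : t' = s * t * s) (z : G) :
    t * (s * z) = s * (t' * z) := by
  subst h
  simp only [← mul_assoc]
  rw [hs, one_mul]

theorem pushC {G : Type*} [Group G] {s t : G} (h : Commute s t) (z : G) :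
    s * (t * z) = t * (s * z) := by
  rw [← mul_assoc, h.eq, mul_assoc]

theorem E8_delta (G : Type*) [Group G] (x : ℤ → G)
    (hsq : ∀ i : ℤ, (-1) ≤ i → i ≤ 6 → x i ^ 2 = 1)
    (hbraid : ∀ i : ℤ, (-1) ≤ i → i ≤ 3 → x (i+1) * x i * x (i+1) = x i * x (i+1) * x i)
    (h53 : x 5 * x 3 * x 5 = x 3 * x 5 * x 3)
    (h64 : x 6 * x 4 * x 6 = x 4 * x 6 * x 4)
    (hcomm : ∀ i j : ℤ, (-1) ≤ j → j + 1 < i → i ≤ 4 → x i * x j = x j * x i)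
    (hcomm5 : ∀ i : ℤ, (-1) ≤ i → i ≤ 6 → i ≠ 3 → i ≠ 5 → x 5 * x i = x i * x 5)
    (hcomm6 : ∀ i : ℤ, (-1) ≤ i → i ≤ 6 → i ≠ 4 → i ≠ 6 → x 6 * x i = x i * x 6) :
    ∀ i j k l m p : ℤ, -1 ≤ i → i < j → j < k → k ≤ 2 → -1 ≤ l → l < m → m < p → p ≤ k + 2 →
      primProd x 6 i * primProd x 5 j * descProd x 4 k * primProd x 5 3 * x 4 * primProd x 6 l *
        primProd x 5 m * descProd x 4 p * primProd x 6 (k+3) =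
      x 4 * primProd x 6 i * primProd x 5 j * descProd x 4 k * primProd x 5 3 * x 4 *
        primProd x 6 l * primProd x 5 m * descProd x 4 p * primProd x 6 (k+4) := by
  have q : ∀ i : ℤ, (-1) ≤ i → i ≤ 6 → x i * x i = 1 := fun i h h' => by
    rw [← pow_two]; exact hsq i h h'
  have qn := q (-1) (by norm_num) (by norm_num)
  have q0 := q 0 (by norm_num) (by norm_num)
  have q1 := q 1 (by norm_num) (by norm_num)
  have q2 := q 2 (by norm_num) (by norm_num)
  have q3 := q 3 (by norm_num) (by norm_num)
  have q4 := q 4 (by norm_num) (by norm_num)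
  have q5 := q 5 (by norm_num) (by norm_num)
  have q6 := q 6 (by norm_num) (by norm_num)
  have C : ∀ i j : ℤ, (-1) ≤ j → j + 1 < i → i ≤ 4 → Commute (x i) (x j) := hcomm
  have C' : ∀ i j : ℤ, (-1) ≤ j → j + 1 < i → i ≤ 4 → Commute (x j) (x i) :=
    fun i j h1 h2 h3 => (hcomm i j h1 h2 h3).symm
  have C5 : ∀ i : ℤ, (-1) ≤ i → i ≤ 6 → i ≠ 3 → i ≠ 5 → Commute (x i) (x 5) :=
    fun i h1 h2 h3 h4 => (hcomm5 i h1 h2 h3 h4).symm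
  have C6 : ∀ i : ℤ, (-1) ≤ i → i ≤ 6 → i ≠ 4 → i ≠ 6 → Commute (x i) (x 6) :=
    fun i h1 h2 h3 h4 => (hcomm6 i h1 h2 h3 h4).symm
  have b12 : x 2 * x 1 * x 2 = x 1 * x 2 * x 1 := hbraid 1 (by norm_num) (by norm_num)
  have b23 : x 3 * x 2 * x 3 = x 2 * x 3 * x 2 := hbraid 2 (by norm_num) (by norm_num)
  have b34 : x 4 * x 3 * x 4 = x 3 * x 4 * x 3 := hbraid 3 (by norm_num) (by norm_num)
  -- the reflections occurring along the way
  obtain ⟨a0, ha0⟩ : ∃ t, t = x 6 := ⟨_, rfl⟩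
  obtain ⟨a1, ha1⟩ : ∃ t, t = x 4 * a0 * x 4 := ⟨_, rfl⟩
  obtain ⟨a2, ha2⟩ : ∃ t, t = x 3 * a1 * x 3 := ⟨_, rfl⟩
  obtain ⟨a3, ha3⟩ : ∃ t, t = x 2 * a2 * x 2 := ⟨_, rfl⟩
  obtain ⟨a4, ha4⟩ : ∃ t, t = x 1 * a3 * x 1 := ⟨_, rfl⟩
  obtain ⟨b2, hb2⟩ : ∃ t, t = x 5 * a2 * x 5 := ⟨_, rfl⟩
  obtain ⟨b3, hb3⟩ : ∃ t, t = x 5 * a3 * x 5 := ⟨_, rfl⟩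
  obtain ⟨b4, hb4⟩ : ∃ t, t = x 5 * a4 * x 5 := ⟨_, rfl⟩
  obtain ⟨c3, hc3⟩ : ∃ t, t = x 3 * b3 * x 3 := ⟨_, rfl⟩
  obtain ⟨c4, hc4⟩ : ∃ t, t = x 3 * b4 * x 3 := ⟨_, rfl⟩
  obtain ⟨d3, hd3⟩ : ∃ t, t = x 4 * c3 * x 4 := ⟨_, rfl⟩
  obtain ⟨d4, hd4⟩ : ∃ t, t = x 4 * c4 * x 4 := ⟨_, rfl⟩
  have swp : ∀ s t r : G, Commute s t → s * (t * r * t) * s = t * (s * r * s) * t := by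
    intro s t r h
    have h1 : s * t = t * s := h
    calc s * (t * r * t) * s = (s * t) * r * (t * s) := by simp only [mul_assoc]
      _ = (t * s) * r * (s * t) := by rw [h1]
      _ = _ := by simp only [mul_assoc]
  have hb3' : b3 = x 2 * b2 * x 2 := by
    rw [hb3, ha3, hb2]; exact swp _ _ _ (C5 2 (by norm_num) (by norm_num) (by norm_num) (by norm_num)).symm
  have hb4' : b4 = x 1 * b3 * x 1 := by
    rw [hb4, ha4, hb3]; exact swp _ _ _ (C5 1 (by norm_num) (by norm_num) (by norm_num) (by norm_num)).symm
  -- commutation facts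
  have k0 : ∀ i : ℤ, (-1) ≤ i → i ≤ 5 → i ≠ 4 → Commute (x i) a0 := by
    intro i h1 h2 h3
    rw [ha0]; exact C6 i h1 (by omega) h3 (by omega)
  have k1 : ∀ i : ℤ, (-1) ≤ i → i ≤ 2 → Commute (x i) a1 := by
    intro i h1 h2
    rw [ha1]; exact comm_cj (C' 4 i h1 (by omega) (by omega)) (k0 i h1 (by omega) (by omega))
  have k2 : ∀ i : ℤ, (-1) ≤ i → i ≤ 1 → Commute (x i) a2 := by
    intro i h1 h2
    rw [ha2]; exact comm_cj (C' 3 i h1 (by omega) (by omega)) (k1 i h1 (by omega))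
  have k24 : Commute (x 4) a2 := by
    rw [ha2, ha1]; exact comm_braid b34 (k0 3 (by norm_num) (by norm_num) (by norm_num))
  have k33 : Commute (x 3) a3 := by
    rw [ha3, ha2]; exact comm_braid b23 (k1 2 (by norm_num) (by norm_num))
  have kb2 : ∀ i : ℤ, (-1) ≤ i → i ≤ 1 → Commute (x i) b2 := by
    intro i h1 h2
    rw [hb2]; exact comm_cj (C5 i h1 (by omega) (by omega) (by omega)) (k2 i h1 h2)
  have kb3 : ∀ i : ℤ, (-1) ≤ i → i ≤ 0 → Commute (x i) b3 := by
    intro i h1 h2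
    rw [hb3']; exact comm_cj (C' 2 i h1 (by omega) (by omega)) (kb2 i h1 (by omega))
  have kb42 : Commute (x 2) b4 := by
    rw [hb4', hb3']; exact comm_braid b12 (kb2 1 (by norm_num) (by norm_num))
  have h64' : a1 = x 6 * x 4 * x 6 := by rw [ha1, ha0, h64]
  have s6 : ∀ i : ℤ, (-1) ≤ i → i ≤ 5 → i ≠ 4 → Commute (x i) (x 6) := by
    intro i h1 h2 h3
    exact C6 i h1 (by omega) h3 (by omega)
  have kd3 : Commute (x 6) d3 := by
    have e : c3 = x 6 * (x 3 * (x 4 * (x 5 * (x 2 * x 3 * x 2) * x 5) * x 4) * x 3) * x 6 := by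
      rw [hc3, hb3, ha3, ha2, h64']
      rw [swp (x 3) (x 6) _ (s6 3 (by norm_num) (by norm_num) (by norm_num))]
      rw [swp (x 2) (x 6) _ (s6 2 (by norm_num) (by norm_num) (by norm_num))]
      rw [swp (x 5) (x 6) _ (s6 5 (by norm_num) (by norm_num) (by norm_num))]
      rw [swp (x 3) (x 6) _ (s6 3 (by norm_num) (by norm_num) (by norm_num))]
      rw [← b34]
      rw [swp (x 2) (x 4) _ (C' 4 2 (by norm_num) (by norm_num) (by norm_num))]
      rw [swp (x 5) (x 4) _ (C5 4 (by norm_num) (by norm_num) (by norm_num) (by norm_num)).symm]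
    have k : Commute (x 4) (x 3 * (x 4 * (x 5 * (x 2 * x 3 * x 2) * x 5) * x 4) * x 3) := by
      apply comm_braid b34
      rw [← b23]
      exact comm_braid h53.symm (C5 2 (by norm_num) (by norm_num) (by norm_num) (by norm_num)).symm
    rw [hd3, e]
    exact comm_braid h64 k
  have kd4 : Commute (x 6) d4 := by
    have e : c4 = x 6 * (x 3 * (x 4 * (x 5 * (x 1 * (x 2 * x 3 * x 2) * x 1) * x 5) * x 4) * x 3) * x 6 := by
      rw [hc4, hb4, ha4, ha3, ha2, h64']
      rw [swp (x 3) (x 6) _ (s6 3 (by norm_num) (by norm_num) (by norm_num))]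
      rw [swp (x 2) (x 6) _ (s6 2 (by norm_num) (by norm_num) (by norm_num))]
      rw [swp (x 1) (x 6) _ (s6 1 (by norm_num) (by norm_num) (by norm_num))]
      rw [swp (x 5) (x 6) _ (s6 5 (by norm_num) (by norm_num) (by norm_num))]
      rw [swp (x 3) (x 6) _ (s6 3 (by norm_num) (by norm_num) (by norm_num))]
      rw [← b34]
      rw [swp (x 2) (x 4) _ (C' 4 2 (by norm_num) (by norm_num) (by norm_num))]
      rw [swp (x 1) (x 4) _ (C' 4 1 (by norm_num) (by norm_num) (by norm_num))]
      rw [swp (x 5) (x 4) _ (C5 4 (by norm_num) (by norm_num) (by norm_num) (by norm_num)).symm]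
    have k : Commute (x 4)
        (x 3 * (x 4 * (x 5 * (x 1 * (x 2 * x 3 * x 2) * x 1) * x 5) * x 4) * x 3) := by
      apply comm_braid b34
      rw [← b23, swp _ _ _ (C' 3 1 (by norm_num) (by norm_num) (by norm_num))]
      exact comm_braid h53.symm (comm_cj
        (C5 1 (by norm_num) (by norm_num) (by norm_num) (by norm_num)).symm
        (C5 2 (by norm_num) (by norm_num) (by norm_num) (by norm_num)).symm)
    rw [hd4, e]
    exact comm_braid h64 k
  have V1 : ∀ l m p : ℤ, -1 ≤ l → l < m → m < p → p ≤ 3 →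
      primProd x 6 l * primProd x 5 m * descProd x 4 p * a1 =
      d4 * (primProd x 6 l * primProd x 5 m * descProd x 4 p) := by
    intro l m p h1 h2 h3 h4
    have M : ∀ z, x 3 * (a1 * z) = a2 * (x 3 * z) := pushL q3 ha2
    have M2 : ∀ z, x 2 * (a2 * z) = a3 * (x 2 * z) := pushL q2 ha3
    have M3 : ∀ z, x 5 * (a3 * z) = b3 * (x 5 * z) := pushL q5 hb3
    have M4 : ∀ z, x 1 * (b3 * z) = b4 * (x 1 * z) := pushL q1 hb4'
    have M5 : ∀ z, x 3 * (b4 * z) = c4 * (x 3 * z) := pushL q3 hc4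
    have M6 : ∀ z, x 4 * (c4 * z) = d4 * (x 4 * z) := pushL q4 hd4
    have N1 := pushC (k1 1 (by norm_num) (by norm_num))
    have N2 := pushC (k1 2 (by norm_num) (by norm_num))
    have N3 := pushC k24
    have N4 := pushC (k2 0 (by norm_num) (by norm_num))
    have N5 := pushC (k2 1 (by norm_num) (by norm_num))
    have N6 := pushC k33
    have N7 := pushC (kb3 (-1) (by norm_num) (by norm_num))
    have N8 := pushC (kb3 0 (by norm_num) (by norm_num))
    have N9 := pushC kb42
    have N10 := pushC kd4
    suffices H : ∀ z, primProd x 6 l * primProd x 5 m * descProd x 4 p * (a1 * z) =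
        d4 * (primProd x 6 l * primProd x 5 m * descProd x 4 p * z) by simpa using H 1
    intro z
    have hm : m ≤ 2 := by omega
    have hl : l ≤ 1 := by omega
    interval_cases l <;> interval_cases m
    all_goals interval_cases p
    all_goals
      simp [primProd, descProd_step, descProd_nil, mul_assoc, M, M2, M3, M4, M5, M6,
        N1, N2, N3, N4, N5, N6, N7, N8, N9, N10]
  have V2 : ∀ l m p : ℤ, -1 ≤ l → l < m → m < p → p ≤ 4 →
      primProd x 6 l * primProd x 5 m * descProd x 4 p * a0 =
      d3 * (primProd x 6 l * primProd x 5 m * descProd x 4 p) := by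
    intro l m p h1 h2 h3 h4
    have M0 : ∀ z, x 4 * (a0 * z) = a1 * (x 4 * z) := pushL q4 ha1
    have M1 : ∀ z, x 3 * (a1 * z) = a2 * (x 3 * z) := pushL q3 ha2
    have M2 : ∀ z, x 5 * (a2 * z) = b2 * (x 5 * z) := pushL q5 hb2
    have M3 : ∀ z, x 2 * (b2 * z) = b3 * (x 2 * z) := pushL q2 hb3'
    have M5 : ∀ z, x 3 * (b3 * z) = c3 * (x 3 * z) := pushL q3 hc3
    have M6 : ∀ z, x 4 * (c3 * z) = d3 * (x 4 * z) := pushL q4 hd3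
    have N1 := pushC (k0 1 (by norm_num) (by norm_num) (by norm_num))
    have N2 := pushC (k0 2 (by norm_num) (by norm_num) (by norm_num))
    have N3 := pushC (k0 3 (by norm_num) (by norm_num) (by norm_num))
    have N4 := pushC (k1 0 (by norm_num) (by norm_num))
    have N5 := pushC (k1 1 (by norm_num) (by norm_num))
    have N6 := pushC (k1 2 (by norm_num) (by norm_num))
    have N7 := pushC (kb2 (-1) (by norm_num) (by norm_num))
    have N8 := pushC (kb2 0 (by norm_num) (by norm_num))
    have N9 := pushC (kb2 1 (by norm_num) (by norm_num))
    have N10 := pushC kd3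
    suffices H : ∀ z, primProd x 6 l * primProd x 5 m * descProd x 4 p * (a0 * z) =
        d3 * (primProd x 6 l * primProd x 5 m * descProd x 4 p * z) by simpa using H 1
    intro z
    have hm : m ≤ 3 := by omega
    have hl : l ≤ 2 := by omega
    interval_cases l <;> interval_cases m
    all_goals interval_cases p
    all_goals
      simp [primProd, descProd_step, descProd_nil, mul_assoc, M0, M1, M2, M3, M5, M6,
        N1, N2, N3, N4, N5, N6, N7, N8, N9, N10]
  -- moving `x 4` through the first half
  have T0 : ∀ z, x 4 * (x 6 * (x 4 * z)) = x 6 * (x 4 * (a0 * z)) := by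
    intro z
    have : x 4 * x 6 * x 4 * z = x 6 * x 4 * x 6 * z := by rw [h64]
    rw [ha0]; simpa only [mul_assoc] using this
  have R1 : ∀ z, a0 * (x 4 * z) = x 4 * (a1 * z) := pushR q4 ha1
  have R2 : ∀ z, a1 * (x 3 * z) = x 3 * (a2 * z) := pushR q3 ha2
  have R3 : ∀ z, a2 * (x 2 * z) = x 2 * (a3 * z) := pushR q2 ha3
  have R4 : ∀ z, a3 * (x 1 * z) = x 1 * (a4 * z) := pushR q1 ha4
  have R5 : ∀ z, a3 * (x 5 * z) = x 5 * (b3 * z) := pushR q5 hb3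
  have R6 : ∀ z, a4 * (x 5 * z) = x 5 * (b4 * z) := pushR q5 hb4
  have R7 : ∀ z, b3 * (x 3 * z) = x 3 * (c3 * z) := pushR q3 hc3
  have R8 : ∀ z, b4 * (x 3 * z) = x 3 * (c4 * z) := pushR q3 hc4
  have R9 : ∀ z, c3 * (x 4 * z) = x 4 * (d3 * z) := pushR q4 hd3
  have R10 : ∀ z, c4 * (x 4 * z) = x 4 * (d4 * z) := pushR q4 hd4
  have Q : ∀ i : ℤ, (-1) ≤ i → i ≤ 5 → i ≠ 4 → ∀ z, a0 * (x i * z) = x i * (a0 * z) :=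
    fun i h1 h2 h3 z => (pushC (k0 i h1 h2 h3) z).symm
  have Qn := Q (-1) (by norm_num) (by norm_num) (by norm_num)
  have Q0 := Q 0 (by norm_num) (by norm_num) (by norm_num)
  have Q1 := Q 1 (by norm_num) (by norm_num) (by norm_num)
  have Q2 := Q 2 (by norm_num) (by norm_num) (by norm_num)
  have Q3 := Q 3 (by norm_num) (by norm_num) (by norm_num)
  have Q5 := Q 5 (by norm_num) (by norm_num) (by norm_num)
  have U : ∀ i j k : ℤ, -1 ≤ i → i < j → j < k → k ≤ 2 → ∀ z,
      x 4 * (primProd x 6 i * primProd x 5 j * descProd x 4 k * primProd x 5 3 * x 4 * z) =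
      primProd x 6 i * primProd x 5 j * descProd x 4 k * primProd x 5 3 * x 4 *
        ((if k = 1 then d4 else d3) * z) := by
    intro i j k h1 h2 h3 h4 z
    have hj : j ≤ 1 := by omega
    have hi : i ≤ 0 := by omega
    interval_cases i <;> interval_cases j
    all_goals interval_cases k
    all_goals
      simp [primProd, descProd_step, descProd_nil, mul_assoc, T0, R1, R2, R3, R4, R5, R6, R7, R8,
        R9, R10, Qn, Q0, Q1, Q2, Q3, Q5]
  intro i j k l m p h1 h2 h3 h4 h5 h6 h7 h8
  have hU := U i j k h1 h2 h3 h4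
  obtain rfl | rfl : k = 1 ∨ k = 2 := by omega
  · have hV := V1 l m p h5 h6 h7 h8
    have e1 : primProd x 6 (1 + 3) = a1 * x 6 := by
      rw [ha1, ha0]
      simp only [← h64]
      simp [primProd, descProd_step, descProd_nil, mul_assoc, q6]
    have e2 : primProd x 6 (1 + 4) = x 6 := by
      simp [primProd, descProd_nil]
    rw [e1, e2]
    have := hU (primProd x 6 l * primProd x 5 m * descProd x 4 p * x 6)
    rw [if_pos rfl, ← mul_assoc d4, ← hV] at this
    simpa only [mul_assoc] using this.symm
  · have hV := V2 l m p h5 h6 h7 h8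
    have e1 : primProd x 6 (2 + 3) = a0 := by
      simp [primProd, descProd_nil, ha0]
    have e2 : primProd x 6 (2 + 4) = 1 := by
      simp [primProd]
    rw [e1, e2]
    have := hU (primProd x 6 l * primProd x 5 m * descProd x 4 p)
    rw [if_neg (by norm_num), ← hV] at this
    simpa only [mul_assoc, mul_one] using this.symm
end

section
/- In the Coxeter group W of type E8, for all integers i, j, k, l, m, p with −1 ≤ i < j < k ≤ 1 and −1 ≤ l < m < p ≤ k+2, the identity x'_{6,i} · x'_{5,j} · x_{4,k} · x'_{5,2} · x'_{6,l} · x'_{5,m} · x_{4,p} · x'_{5,k+3} = x4 · x'_{6,i} · x'_{5,j} · x_{4,k} · x'_{5,2} · x'_{6,l} · x'_{5,m} · x_{4,p} · x'_{5,k+4} holds. -/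
namespace E8aux

/-- Adjacency in the E8 diagram; the letter `c` stands for `x (c-1)`. -/
def adj (a b : ℕ) : Bool :=
  [(0,1),(1,2),(2,3),(3,4),(4,5),(4,6),(5,7)].contains (min a b, max a b)

/-- Distinct commuting letters. -/
def cm (a b : ℕ) : Bool := decide (a < 8) && decide (b < 8) && !(a == b) && !(adj a b)

/-- One commutation or braid move at the head of a word. -/
def head : List ℕ → List ℕ
  | a :: b :: l => if cm a b then b :: a :: l else
      match l with
      | c :: l' => if adj a b && (a == c) then b :: a :: b :: l' else a :: b :: c :: l'
      | [] => [a, b]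
  | l => l

/-- One move at a position. -/
def step : ℕ → List ℕ → List ℕ
  | 0, l => head l
  | n+1, a :: l => a :: step n l
  | _+1, [] => []

def run : List ℕ → List ℕ → List ℕ
  | [], l => l
  | n :: ns, l => run ns (step n l)

def ev {G : Type*} [Group G] (x : ℤ → G) (l : List ℕ) : G := (l.map (fun c : ℕ => x ((c : ℤ) - 1))).prod

section
variable {G : Type*} [Group G] (x : ℤ → G)
  (hc : ∀ a b : ℕ, cm a b = true → x ((a:ℤ)-1) * x ((b:ℤ)-1) = x ((b:ℤ)-1) * x ((a:ℤ)-1))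
  (hb : ∀ a b : ℕ, adj a b = true → x ((a:ℤ)-1) * x ((b:ℤ)-1) * x ((a:ℤ)-1) =
    x ((b:ℤ)-1) * x ((a:ℤ)-1) * x ((b:ℤ)-1))

theorem ev_cons (a : ℕ) (l : List ℕ) : ev x (a :: l) = x ((a:ℤ)-1) * ev x l := by
  simp [ev]

theorem ev_head (hc : ∀ a b : ℕ, cm a b = true →
      x ((a:ℤ)-1) * x ((b:ℤ)-1) = x ((b:ℤ)-1) * x ((a:ℤ)-1))
    (hb : ∀ a b : ℕ, adj a b = true → x ((a:ℤ)-1) * x ((b:ℤ)-1) * x ((a:ℤ)-1) =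
      x ((b:ℤ)-1) * x ((a:ℤ)-1) * x ((b:ℤ)-1)) (l : List ℕ) : ev x (head l) = ev x l := by
  match l with
  | [] => rfl
  | [a] => rfl
  | [a, b] =>
    by_cases h : cm a b = true
    · simp only [head, h, if_true, ev_cons, ← mul_assoc, hc a b h]
    · simp [head, h]
  | a :: b :: c :: l' =>
    by_cases h : cm a b = true
    · simp only [head, h, if_true, ev_cons, ← mul_assoc, hc a b h]
    · by_cases h2 : (adj a b && (a == c)) = true
      · simp only [head, h, h2, if_true]
        simp only [Bool.and_eq_true, beq_iff_eq] at h2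
        obtain ⟨h2, rfl⟩ := h2
        simp only [Bool.false_eq_true, if_false, ev_cons, ← mul_assoc, hb a b h2]
      · simp only [head, h, h2]
        simp

theorem ev_step (hc : ∀ a b : ℕ, cm a b = true →
      x ((a:ℤ)-1) * x ((b:ℤ)-1) = x ((b:ℤ)-1) * x ((a:ℤ)-1))
    (hb : ∀ a b : ℕ, adj a b = true → x ((a:ℤ)-1) * x ((b:ℤ)-1) * x ((a:ℤ)-1) =
      x ((b:ℤ)-1) * x ((a:ℤ)-1) * x ((b:ℤ)-1)) (n : ℕ) :
    ∀ l : List ℕ, ev x (step n l) = ev x l := by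
  induction n with
  | zero => exact ev_head x hc hb
  | succ n ih =>
    intro l
    cases l with
    | nil => rfl
    | cons a l => simp only [step, ev_cons, ih]

theorem ev_run (hc : ∀ a b : ℕ, cm a b = true →
      x ((a:ℤ)-1) * x ((b:ℤ)-1) = x ((b:ℤ)-1) * x ((a:ℤ)-1))
    (hb : ∀ a b : ℕ, adj a b = true → x ((a:ℤ)-1) * x ((b:ℤ)-1) * x ((a:ℤ)-1) =
      x ((b:ℤ)-1) * x ((a:ℤ)-1) * x ((b:ℤ)-1)) (ns : List ℕ) :
    ∀ l : List ℕ, ev x (run ns l) = ev x l := by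
  induction ns with
  | nil => intro l; rfl
  | cons n ns ih => intro l; simp only [run, ih, ev_step x hc hb]
end

/-- Letters of `descProd`. -/
def dw (i j : ℤ) : List ℕ := (List.range (i + 1 - j).toNat).map (fun n : ℕ => (i + 1 - (n : ℤ)).toNat)

def pw (i j : ℤ) : List ℕ := if i ≤ j then [] else (i + 1).toNat :: dw (i - 2) j

theorem ev_dw {G : Type*} [Group G] (x : ℤ → G) (i j : ℤ) (hj : -1 ≤ j) :
    descProd x i j = ev x (dw i j) := by
  unfold descProd ev dw
  simp only [List.pure_def, List.bind_eq_flatMap, ← List.map_eq_flatMap,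
    List.map_map]
  congr 1
  apply List.map_congr_left
  intro n hn
  rw [List.mem_range] at hn
  simp only [Function.comp]
  congr 1
  omega

theorem ev_pw {G : Type*} [Group G] (x : ℤ → G) (i j : ℤ) (hj : -1 ≤ j) :
    primProd x i j = ev x (pw i j) := by
  unfold primProd pw
  split_ifs with h
  · simp [ev]
  · rw [ev_cons, ev_dw x _ _ hj]
    congr 2
    omega

theorem ev_app {G : Type*} [Group G] (x : ℤ → G) (a b : List ℕ) :
    ev x a * ev x b = ev x (a ++ b) := by
  simp [ev]

/-- The word to the left of the last factor. -/
def word (l m p : ℤ) : List ℕ :=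
  pw 6 (-1) ++ pw 5 0 ++ dw 4 1 ++ pw 5 2 ++ pw 6 l ++ pw 5 m ++ dw 4 p

theorem cert (l m p : ℤ) (hl : -1 ≤ l) (hlm : l < m) (hmp : m < p) (hp : p ≤ 3) :
    ∃ ns, run ns (word l m p ++ [6]) = 5 :: word l m p := by
  have h : (l = -1 ∨ l = 0 ∨ l = 1) ∧ (m = 0 ∨ m = 1 ∨ m = 2) ∧ (p = 1 ∨ p = 2 ∨ p = 3) := by omega
  obtain ⟨rfl | rfl | rfl, rfl | rfl | rfl, rfl | rfl | rfl⟩ := h <;> first | omega | skip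
  · exact ⟨[18, 17, 16, 15, 14, 13, 19, 20, 18, 20, 17, 16, 15, 25, 24, 23, 26, 25, 24, 22, 24,
      25, 26, 21, 20, 18, 17, 30, 29, 28, 27, 26, 25, 24, 22, 20, 19, 24, 23, 28, 27, 26,
      31, 30, 34, 33, 32, 31, 29, 31, 32, 28, 27, 25, 27, 28, 29, 24, 22, 24, 25, 21, 20,
      18, 20, 21, 23, 25, 26, 27, 28, 29, 30, 31, 16, 18, 19, 21, 22, 27, 26, 25, 23, 25,
      24, 26, 25, 27, 26, 14, 16, 17, 18, 21, 19, 21, 20, 12, 14, 15, 16, 17, 18, 19, 11,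
      10, 9, 8, 7, 6, 5, 4, 3, 2, 0], by decide +kernel⟩
  · exact ⟨[18, 17, 16, 15, 14, 13, 19, 20, 18, 20, 17, 16, 15, 25, 24, 23, 26, 25, 24, 22, 24,
      25, 26, 21, 20, 18, 17, 30, 29, 28, 27, 26, 25, 24, 22, 20, 19, 24, 23, 28, 27, 26,
      31, 30, 33, 32, 31, 29, 31, 32, 28, 27, 25, 27, 28, 29, 24, 22, 24, 25, 21, 20, 18,
      20, 21, 23, 25, 26, 27, 28, 29, 30, 31, 16, 18, 19, 21, 22, 27, 26, 25, 23, 25, 24,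
      26, 25, 27, 26, 14, 16, 17, 18, 21, 19, 21, 20, 12, 14, 15, 16, 17, 18, 19, 11, 10,
      9, 8, 7, 6, 5, 4, 3, 2, 0], by decide +kernel⟩
  · exact ⟨[18, 17, 16, 15, 14, 13, 19, 20, 18, 20, 17, 16, 15, 25, 24, 23, 26, 25, 24, 22, 24,
      25, 26, 21, 20, 18, 17, 30, 29, 28, 27, 26, 25, 24, 22, 20, 19, 24, 23, 28, 27, 26,
      31, 30, 32, 31, 29, 31, 32, 28, 27, 25, 27, 28, 29, 24, 22, 24, 25, 21, 20, 18, 20,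
      21, 23, 25, 26, 27, 28, 29, 30, 31, 16, 18, 19, 21, 22, 27, 26, 25, 23, 25, 24, 26,
      25, 27, 26, 14, 16, 17, 18, 21, 19, 21, 20, 12, 14, 15, 16, 17, 18, 19, 11, 10, 9, 8,
      7, 6, 5, 4, 3, 2, 0], by decide +kernel⟩
  · exact ⟨[18, 17, 16, 15, 14, 13, 19, 20, 18, 20, 17, 16, 15, 25, 24, 23, 26, 25, 24, 22, 24,
      25, 26, 21, 20, 18, 17, 29, 28, 27, 26, 25, 24, 22, 20, 19, 24, 23, 28, 27, 26, 30,
      32, 31, 29, 31, 28, 27, 25, 27, 28, 29, 24, 22, 24, 25, 21, 20, 18, 20, 21, 23, 25,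
      26, 27, 28, 29, 30, 16, 18, 19, 21, 22, 27, 26, 25, 23, 25, 24, 26, 25, 27, 26, 14,
      16, 17, 18, 21, 19, 21, 20, 12, 14, 15, 16, 17, 18, 19, 11, 10, 9, 8, 7, 6, 5, 4, 3,
      2, 0], by decide +kernel⟩
  · exact ⟨[18, 17, 16, 15, 14, 13, 19, 20, 18, 20, 17, 16, 15, 25, 24, 23, 26, 25, 24, 22, 24,
      25, 26, 21, 20, 18, 17, 29, 28, 27, 26, 25, 24, 22, 20, 19, 24, 23, 28, 27, 26, 30,
      31, 29, 31, 28, 27, 25, 27, 28, 29, 24, 22, 24, 25, 21, 20, 18, 20, 21, 23, 25, 26,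
      27, 28, 29, 30, 16, 18, 19, 21, 22, 27, 26, 25, 23, 25, 24, 26, 25, 27, 26, 14, 16,
      17, 18, 21, 19, 21, 20, 12, 14, 15, 16, 17, 18, 19, 11, 10, 9, 8, 7, 6, 5, 4, 3, 2, 0], by decide +kernel⟩
  · exact ⟨[18, 17, 16, 15, 14, 13, 19, 20, 18, 20, 17, 16, 15, 25, 24, 23, 26, 25, 24, 22, 24,
      25, 26, 21, 20, 18, 17, 28, 27, 26, 25, 24, 22, 20, 19, 24, 23, 28, 27, 26, 29, 28,
      27, 25, 27, 28, 29, 24, 22, 24, 25, 21, 20, 18, 20, 21, 23, 25, 26, 27, 28, 29, 16,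
      18, 19, 21, 22, 27, 26, 25, 23, 25, 24, 26, 25, 27, 26, 14, 16, 17, 18, 21, 19, 21,
      20, 12, 14, 15, 16, 17, 18, 19, 11, 10, 9, 8, 7, 6, 5, 4, 3, 2, 0], by decide +kernel⟩
  · exact ⟨[18, 17, 16, 15, 14, 13, 19, 20, 18, 20, 17, 16, 15, 24, 23, 25, 24, 22, 24, 25, 21,
      20, 18, 17, 28, 27, 26, 25, 24, 22, 20, 19, 24, 23, 27, 26, 29, 31, 30, 28, 30, 27,
      25, 27, 28, 24, 22, 24, 25, 21, 20, 18, 20, 21, 23, 25, 26, 27, 28, 29, 16, 18, 19,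
      21, 22, 26, 25, 23, 25, 24, 26, 25, 14, 16, 17, 18, 21, 19, 21, 20, 12, 14, 15, 16,
      17, 18, 19, 11, 10, 9, 8, 7, 6, 5, 4, 3, 2, 0], by decide +kernel⟩
  · exact ⟨[18, 17, 16, 15, 14, 13, 19, 20, 18, 20, 17, 16, 15, 24, 23, 25, 24, 22, 24, 25, 21,
      20, 18, 17, 28, 27, 26, 25, 24, 22, 20, 19, 24, 23, 27, 26, 29, 30, 28, 30, 27, 25,
      27, 28, 24, 22, 24, 25, 21, 20, 18, 20, 21, 23, 25, 26, 27, 28, 29, 16, 18, 19, 21,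
      22, 26, 25, 23, 25, 24, 26, 25, 14, 16, 17, 18, 21, 19, 21, 20, 12, 14, 15, 16, 17,
      18, 19, 11, 10, 9, 8, 7, 6, 5, 4, 3, 2, 0], by decide +kernel⟩
  · exact ⟨[18, 17, 16, 15, 14, 13, 19, 20, 18, 20, 17, 16, 15, 24, 23, 25, 24, 22, 24, 25, 21,
      20, 18, 17, 27, 26, 25, 24, 22, 20, 19, 24, 23, 27, 26, 28, 27, 25, 27, 28, 24, 22,
      24, 25, 21, 20, 18, 20, 21, 23, 25, 26, 27, 28, 16, 18, 19, 21, 22, 26, 25, 23, 25,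
      24, 26, 25, 14, 16, 17, 18, 21, 19, 21, 20, 12, 14, 15, 16, 17, 18, 19, 11, 10, 9, 8,
      7, 6, 5, 4, 3, 2, 0], by decide +kernel⟩
  · exact ⟨[18, 17, 16, 15, 14, 13, 19, 20, 18, 20, 17, 16, 15, 23, 24, 22, 24, 21, 20, 18, 17,
      26, 25, 24, 22, 20, 19, 24, 23, 26, 27, 25, 27, 24, 22, 24, 25, 21, 20, 18, 20, 21,
      23, 25, 26, 27, 16, 18, 19, 21, 22, 25, 23, 25, 24, 14, 16, 17, 18, 21, 19, 21, 20,
      12, 14, 15, 16, 17, 18, 19, 11, 10, 9, 8, 7, 6, 5, 4, 3, 2, 0], by decide +kernel⟩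

end E8aux

open E8aux
theorem E8_rho (G : Type*) [Group G] (x : ℤ → G)
    (hsq : ∀ i : ℤ, (-1) ≤ i → i ≤ 6 → x i ^ 2 = 1)
    (hbraid : ∀ i : ℤ, (-1) ≤ i → i ≤ 3 → x (i+1) * x i * x (i+1) = x i * x (i+1) * x i)
    (h53 : x 5 * x 3 * x 5 = x 3 * x 5 * x 3)
    (h64 : x 6 * x 4 * x 6 = x 4 * x 6 * x 4)
    (hcomm : ∀ i j : ℤ, (-1) ≤ j → j + 1 < i → i ≤ 4 → x i * x j = x j * x i)
    (hcomm5 : ∀ i : ℤ, (-1) ≤ i → i ≤ 6 → i ≠ 3 → i ≠ 5 → x 5 * x i = x i * x 5)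
    (hcomm6 : ∀ i : ℤ, (-1) ≤ i → i ≤ 6 → i ≠ 4 → i ≠ 6 → x 6 * x i = x i * x 6) :
    ∀ i j k l m p : ℤ, -1 ≤ i → i < j → j < k → k ≤ 1 → -1 ≤ l → l < m → m < p → p ≤ k + 2 →
      primProd x 6 i * primProd x 5 j * descProd x 4 k * primProd x 5 2 * primProd x 6 l *
        primProd x 5 m * descProd x 4 p * primProd x 5 (k+3) =
      x 4 * primProd x 6 i * primProd x 5 j * descProd x 4 k * primProd x 5 2 * primProd x 6 l *
        primProd x 5 m * descProd x 4 p * primProd x 5 (k+4) := by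
  intro i j k l m p hi hij hjk hk hl hlm hmp hp
  obtain rfl : i = -1 := by omega
  obtain rfl : j = 0 := by omega
  obtain rfl : k = 1 := by omega
  have hc : ∀ a b : ℕ, cm a b = true →
      x ((a:ℤ)-1) * x ((b:ℤ)-1) = x ((b:ℤ)-1) * x ((a:ℤ)-1) := by
    intro a b h
    have ha : a < 8 := by simp [cm] at h; omega
    have hb : b < 8 := by simp [cm] at h; omega
    have key : ∀ a < 8, ∀ b < 8, cm a b = true → (a = 6 ∧ b ≠ 4 ∧ b ≠ 6) ∨ (b = 6 ∧ a ≠ 4 ∧ a ≠ 6) ∨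
        (a = 7 ∧ b ≠ 5 ∧ b ≠ 7) ∨ (b = 7 ∧ a ≠ 5 ∧ a ≠ 7) ∨ (a ≤ 5 ∧ b + 1 < a) ∨
        (b ≤ 5 ∧ a + 1 < b) := by
      intro a ha b hb h
      interval_cases a <;> interval_cases b <;> first | omega | exact absurd h (by decide)
    rcases key a ha b hb h with ⟨rfl, h1⟩ | ⟨rfl, h1⟩ | ⟨rfl, h1⟩ | ⟨rfl, h1⟩ | h1 | h1
    · exact hcomm5 _ (by omega) (by omega) (by omega) (by omega)
    · exact (hcomm5 _ (by omega) (by omega) (by omega) (by omega)).symm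
    · exact hcomm6 _ (by omega) (by omega) (by omega) (by omega)
    · exact (hcomm6 _ (by omega) (by omega) (by omega) (by omega)).symm
    · exact hcomm _ _ (by omega) (by omega) (by omega)
    · exact (hcomm _ _ (by omega) (by omega) (by omega)).symm
  have hb : ∀ a b : ℕ, adj a b = true → x ((a:ℤ)-1) * x ((b:ℤ)-1) * x ((a:ℤ)-1) =
      x ((b:ℤ)-1) * x ((a:ℤ)-1) * x ((b:ℤ)-1) := by
    intro a b h
    have ha : a < 8 ∧ b < 8 := by simp [adj] at h; omega
    obtain ⟨ha, hb⟩ := ha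
    have h0 := hbraid (-1) (by norm_num) (by norm_num)
    have h1 := hbraid 0 (by norm_num) (by norm_num)
    have h2 := hbraid 1 (by norm_num) (by norm_num)
    have h3 := hbraid 2 (by norm_num) (by norm_num)
    have h4 := hbraid 3 (by norm_num) (by norm_num)
    interval_cases a <;> interval_cases b <;>
      first
      | exact absurd h (by decide)
      | exact h0
      | exact h0.symm
      | exact h1
      | exact h1.symm
      | exact h2
      | exact h2.symm
      | exact h3
      | exact h3.symm
      | exact h4
      | exact h4.symm
      | exact h53
      | exact h53.symm
      | exact h64
      | exact h64.symm
  obtain ⟨ns, hns⟩ := cert l m p hl hlm hmp (by omega)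
  have key := ev_run x hc hb ns (word l m p ++ [6])
  rw [hns, ev_cons, ← ev_app] at key
  have e5 : primProd x 5 (1+3) = ev x [6] := by simp [primProd, descProd, ev]
  have e6 : primProd x 5 (1+4) = 1 := by simp [primProd]
  have e4 : x ((5:ℕ) - 1 : ℤ) = x 4 := by norm_num
  rw [e4] at key
  rw [e5, e6, mul_one]
  rw [ev_pw x 6 (-1) (by omega), ev_pw x 5 0 (by omega), ev_dw x 4 1 (by omega),
    ev_pw x 5 2 (by omega), ev_pw x 6 l (by omega), ev_pw x 5 m (by omega),
    ev_dw x 4 p (by omega)]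
  simp only [word, ← ev_app] at key
  simp only [mul_assoc] at key ⊢
  exact key.symm
end

section
/- In the Coxeter group W of type E8, for all integers l, m, p, q with −1 ≤ l < m < p < q ≤ 4, the identity x'_{6,−1} · x'_{5,0} · x_{4,1} · x'_{5,2} · x4 · x'_{6,l} · x'_{5,m} · x_{4,p} · x'_{5,q} · x'_{6,p} = x4 · x'_{6,−1} · x'_{5,0} · x_{4,1} · x'_{5,2} · x4 · x'_{6,l} · x'_{5,m} · x_{4,p} · x'_{5,q} · x'_{6,p+1} holds. -/
/-- Sufficient test for two generators to commute. -/
def cmB (a b : ℤ) : Bool :=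
  decide (-1 ≤ b ∧ b + 1 < a ∧ a ≤ 4) || decide (-1 ≤ a ∧ a + 1 < b ∧ b ≤ 4) ||
  decide (a = 5 ∧ -1 ≤ b ∧ b ≤ 6 ∧ b ≠ 3 ∧ b ≠ 5) ||
  decide (b = 5 ∧ -1 ≤ a ∧ a ≤ 6 ∧ a ≠ 3 ∧ a ≠ 5) ||
  decide (a = 6 ∧ -1 ≤ b ∧ b ≤ 6 ∧ b ≠ 4 ∧ b ≠ 6) ||
  decide (b = 6 ∧ -1 ≤ a ∧ a ≤ 6 ∧ a ≠ 4 ∧ a ≠ 6)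

/-- Sufficient test for two generators to satisfy the braid relation. -/
def brB (a b : ℤ) : Bool :=
  decide (-1 ≤ b ∧ b ≤ 3 ∧ a = b + 1) || decide (-1 ≤ a ∧ a ≤ 3 ∧ b = a + 1) ||
  decide (a = 5 ∧ b = 3) || decide (a = 3 ∧ b = 5) ||
  decide (a = 6 ∧ b = 4) || decide (a = 4 ∧ b = 6)

/-- Try to rewrite `w` as `s :: r` by braid moves. -/
def bringW : ℕ → ℤ → List ℤ → Option (List ℤ)
  | 0, _, _ => none
  | _ + 1, _, [] => none
  | f + 1, s, t :: w =>
    if t = s then some w else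
      (bringW f s w).bind fun r =>
        if cmB t s = true then some (t :: r)
        else if brB t s = true then (bringW f t r).bind fun r' => some (t :: s :: r')
        else none

/-- Test whether two words are braid equivalent. -/
def eqW : List ℤ → List ℤ → Bool
  | w, [] => w.isEmpty
  | w, s :: v => match bringW 60 s w with
    | none => false
    | some r => eqW r v

/-- Word of `descProd`. -/
def dW (i j : ℤ) : List ℤ := (List.range (i + 1 - j).toNat).map (fun n => i - (n : ℤ))

/-- Word of `primProd`. -/
def pW (i j : ℤ) : List ℤ := if i ≤ j then [] else i :: dW (i - 2) j

theorem descProd_dW {G : Type*} [Group G] (x : ℤ → G) (i j : ℤ) :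
    descProd x i j = ((dW i j).map x).prod := by
  simp [descProd, dW, Function.comp_def]

theorem primProd_pW {G : Type*} [Group G] (x : ℤ → G) (i j : ℤ) :
    primProd x i j = ((pW i j).map x).prod := by
  unfold primProd pW
  split_ifs <;> simp [descProd_dW]

theorem bringW_sound {G : Type*} [Group G] (x : ℤ → G)
    (hc : ∀ a b, cmB a b = true → x a * x b = x b * x a)
    (hb : ∀ a b, brB a b = true → x a * x b * x a = x b * x a * x b) :
    ∀ (f : ℕ) (s : ℤ) (w r : List ℤ), bringW f s w = some r →
      (w.map x).prod = x s * (r.map x).prod := by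
  intro f
  induction f with
  | zero => intro s w r h; simp [bringW] at h
  | succ f ih =>
    intro s w r h
    cases w with
    | nil => simp [bringW] at h
    | cons t w =>
      rw [bringW] at h
      by_cases h1 : t = s
      · rw [if_pos h1] at h
        simp only [Option.some.injEq] at h
        subst h; subst h1; simp
      · rw [if_neg h1, Option.bind_eq_some_iff] at h
        obtain ⟨r1, e1, h⟩ := h
        have e1 := ih _ _ _ e1
        split_ifs at h with h2 h3
        · simp only [Option.some.injEq] at h
          subst h
          simp only [List.map_cons, List.prod_cons, e1, ← mul_assoc, hc _ _ h2]
        · rw [Option.bind_eq_some_iff] at h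
          obtain ⟨r2, e2, h⟩ := h
          have e2 := ih _ _ _ e2
          simp only [Option.some.injEq] at h
          subst h
          simp only [List.map_cons, List.prod_cons, e1, e2, ← mul_assoc, hb _ _ h3]

theorem eqW_sound {G : Type*} [Group G] (x : ℤ → G)
    (hc : ∀ a b, cmB a b = true → x a * x b = x b * x a)
    (hb : ∀ a b, brB a b = true → x a * x b * x a = x b * x a * x b) :
    ∀ (v w : List ℤ), eqW w v = true → (w.map x).prod = (v.map x).prod := by
  intro v
  induction v with
  | nil => intro w h; simp [eqW] at h; simp [h]
  | cons s v ih =>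
    intro w h
    rw [eqW] at h
    split at h
    · simp at h
    · rename_i r e
      rw [bringW_sound x hc hb _ _ _ _ e, ih _ h]; simp

/-- Left word. -/
def lhsW (l m p q : ℤ) : List ℤ :=
  pW 6 (-1) ++ pW 5 0 ++ dW 4 1 ++ pW 5 2 ++ [4] ++ pW 6 l ++ pW 5 m ++ dW 4 p ++ pW 5 q ++ pW 6 p

/-- Right word. -/
def rhsW (l m p q : ℤ) : List ℤ :=
  [4] ++ pW 6 (-1) ++ pW 5 0 ++ dW 4 1 ++ pW 5 2 ++ [4] ++ pW 6 l ++ pW 5 m ++ dW 4 p ++ pW 5 q ++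
    pW 6 (p + 1)

theorem words_eq (l m p q : ℤ) (h1 : -1 ≤ l) (h2 : l < m) (h3 : m < p) (h4 : p < q)
    (h5 : q ≤ 4) : eqW (lhsW l m p q) (rhsW l m p q) = true := by
  have hl : l ≤ 1 := by omega
  interval_cases l <;> (have hm : m ≤ 2 := by omega) <;> interval_cases m <;>
    (have hp : p ≤ 3 := by omega) <;> interval_cases p <;> interval_cases q <;> decide +kernel

theorem E8_phi2 (G : Type*) [Group G] (x : ℤ → G)
    (hsq : ∀ i : ℤ, (-1) ≤ i → i ≤ 6 → x i ^ 2 = 1)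
    (hbraid : ∀ i : ℤ, (-1) ≤ i → i ≤ 3 → x (i+1) * x i * x (i+1) = x i * x (i+1) * x i)
    (h53 : x 5 * x 3 * x 5 = x 3 * x 5 * x 3)
    (h64 : x 6 * x 4 * x 6 = x 4 * x 6 * x 4)
    (hcomm : ∀ i j : ℤ, (-1) ≤ j → j + 1 < i → i ≤ 4 → x i * x j = x j * x i)
    (hcomm5 : ∀ i : ℤ, (-1) ≤ i → i ≤ 6 → i ≠ 3 → i ≠ 5 → x 5 * x i = x i * x 5)
    (hcomm6 : ∀ i : ℤ, (-1) ≤ i → i ≤ 6 → i ≠ 4 → i ≠ 6 → x 6 * x i = x i * x 6) :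
    ∀ l m p q : ℤ, -1 ≤ l → l < m → m < p → p < q → q ≤ 4 →
      primProd x 6 (-1) * primProd x 5 0 * descProd x 4 1 * primProd x 5 2 * x 4 * primProd x 6 l *
        primProd x 5 m * descProd x 4 p * primProd x 5 q * primProd x 6 p =
      x 4 * primProd x 6 (-1) * primProd x 5 0 * descProd x 4 1 * primProd x 5 2 * x 4 *
        primProd x 6 l * primProd x 5 m * descProd x 4 p * primProd x 5 q * primProd x 6 (p+1) := by
  intro l m p q h1 h2 h3 h4 h5
  have hc : ∀ a b, cmB a b = true → x a * x b = x b * x a := by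
    intro a b h
    simp only [cmB, Bool.or_eq_true, decide_eq_true_eq] at h
    rcases h with ((((h | h) | h) | h) | h) | h
    · exact hcomm a b h.1 h.2.1 h.2.2
    · exact (hcomm b a h.1 h.2.1 h.2.2).symm
    · obtain ⟨rfl, h⟩ := h
      exact hcomm5 b h.1 h.2.1 h.2.2.1 h.2.2.2
    · obtain ⟨rfl, h⟩ := h
      exact (hcomm5 a h.1 h.2.1 h.2.2.1 h.2.2.2).symm
    · obtain ⟨rfl, h⟩ := h
      exact hcomm6 b h.1 h.2.1 h.2.2.1 h.2.2.2
    · obtain ⟨rfl, h⟩ := h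
      exact (hcomm6 a h.1 h.2.1 h.2.2.1 h.2.2.2).symm
  have hb : ∀ a b, brB a b = true → x a * x b * x a = x b * x a * x b := by
    intro a b h
    simp only [brB, Bool.or_eq_true, decide_eq_true_eq] at h
    rcases h with ((((h | h) | h) | h) | h) | h
    · obtain ⟨h, h', rfl⟩ := h
      exact hbraid b h h'
    · obtain ⟨h, h', rfl⟩ := h
      exact (hbraid a h h').symm
    · obtain ⟨rfl, rfl⟩ := h
      exact h53
    · obtain ⟨rfl, rfl⟩ := h
      exact h53.symm
    · obtain ⟨rfl, rfl⟩ := h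
      exact h64
    · obtain ⟨rfl, rfl⟩ := h
      exact h64.symm
  have key := eqW_sound x hc hb _ _ (words_eq l m p q h1 h2 h3 h4 h5)
  simp only [lhsW, rhsW, List.map_append, List.prod_append, List.map_cons, List.map_nil,
    List.prod_cons, List.prod_nil, mul_one, ← descProd_dW, ← primProd_pW] at key
  exact key
end

section
/- In the Coxeter group W of type E8, for all integers i1, i2, k1 with −1 ≤ i1 < i2 ≤ 1 and −1 ≤ k1 ≤ 3, the identity x'_{6,i1} · x'_{5,i2} · x_{4,2} · x'_{5,3} · x4 · x5 · x'_{6,−1} · x'_{5,0} · x_{4,1} · x'_{5,2} · x_{4,3} · x5 · x'_{6,k1} · x5 = x4 · x'_{6,i1} · x'_{5,i2} · x_{4,2} · x'_{5,3} · x4 · x5 · x'_{6,−1} · x'_{5,0} · x_{4,1} · x'_{5,2} · x_{4,3} · x5 · x'_{6,k1} holds. -/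
/-- Pairs of commuting generators. -/
def e8comm (a b : ℤ) : Prop :=
  (-1 ≤ b ∧ b + 1 < a ∧ a ≤ 4) ∨ (-1 ≤ a ∧ a + 1 < b ∧ b ≤ 4) ∨
  (a = 5 ∧ -1 ≤ b ∧ b ≤ 6 ∧ b ≠ 3 ∧ b ≠ 5) ∨ (b = 5 ∧ -1 ≤ a ∧ a ≤ 6 ∧ a ≠ 3 ∧ a ≠ 5) ∨
  (a = 6 ∧ -1 ≤ b ∧ b ≤ 6 ∧ b ≠ 4 ∧ b ≠ 6) ∨ (b = 6 ∧ -1 ≤ a ∧ a ≤ 6 ∧ a ≠ 4 ∧ a ≠ 6)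

/-- Pairs of braided generators. -/
def e8adj (a b : ℤ) : Prop :=
  (a = b + 1 ∧ -1 ≤ b ∧ b ≤ 3) ∨ (b = a + 1 ∧ -1 ≤ a ∧ a ≤ 3) ∨
  (a = 5 ∧ b = 3) ∨ (a = 3 ∧ b = 5) ∨ (a = 6 ∧ b = 4) ∨ (a = 4 ∧ b = 6)

instance (a b : ℤ) : Decidable (e8comm a b) := by unfold e8comm; infer_instance
instance (a b : ℤ) : Decidable (e8adj a b) := by unfold e8adj; infer_instance

/-- Apply the commutation or braid move at the given position. -/
def e8move : ℕ → List ℤ → List ℤ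
  | 0, [a, b] => if e8comm a b then [b, a] else [a, b]
  | 0, a :: b :: c :: l =>
      if e8comm a b then b :: a :: c :: l
      else if e8adj a b ∧ a = c then b :: a :: b :: l else a :: b :: c :: l
  | n + 1, a :: l => a :: e8move n l
  | _, l => l

theorem e8move_prod {G : Type*} [Group G] (x : ℤ → G)
    (hc : ∀ a b, e8comm a b → x a * x b = x b * x a)
    (ha : ∀ a b, e8adj a b → x a * x b * x a = x b * x a * x b) (n : ℕ) (l : List ℤ) :
    ((e8move n l).map x).prod = (l.map x).prod := by
  fun_induction e8move n l with
  | case1 a b h => simp [hc a b h]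
  | case2 => rfl
  | case3 a b c l h => simp [← mul_assoc, hc a b h]
  | case4 a b c l h h2 =>
    obtain ⟨h2, rfl⟩ := h2
    simp [← mul_assoc, ha a b h2]
  | case5 => rfl
  | case6 n a l ih => simp [ih]
  | case7 => rfl

theorem e8moves_prod {G : Type*} [Group G] (x : ℤ → G)
    (hc : ∀ a b, e8comm a b → x a * x b = x b * x a)
    (ha : ∀ a b, e8adj a b → x a * x b * x a = x b * x a * x b) (m : List ℕ) (l : List ℤ) :
    ((m.foldl (fun w n => e8move n w) l).map x).prod = (l.map x).prod := by
  induction m generalizing l with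
  | nil => rfl
  | cons n m ih => rw [List.foldl_cons, ih, e8move_prod x hc ha]

/-- Descending list `i, i-1, ..., j`. -/
def dL (i j : ℤ) : List ℤ := (List.range (i + 1 - j).toNat).map (fun n : ℕ => i - (n : ℤ))

/-- List version of `primProd`. -/
def pL (i j : ℤ) : List ℤ := if i ≤ j then [] else i :: dL (i - 2) j

theorem dL_prod {G : Type*} [Group G] (x : ℤ → G) (i j : ℤ) :
    ((dL i j).map x).prod = descProd x i j := by
  have h : ∀ l : List ℕ, l.flatMap (fun a : ℕ => [(a : ℤ)]) = l.map (fun a : ℕ => (a : ℤ)) := by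
    intro l
    induction l with
    | nil => rfl
    | cons a l ih => simp [List.flatMap_cons, ih]
  simp [dL, descProd, Function.comp_def, h]

theorem pL_prod {G : Type*} [Group G] (x : ℤ → G) (i j : ℤ) :
    ((pL i j).map x).prod = primProd x i j := by
  unfold pL primProd
  split_ifs <;> simp [dL_prod]

/-- The common word. -/
def e8w (i1 i2 k1 : ℤ) : List ℤ :=
  pL 6 i1 ++ pL 5 i2 ++ dL 4 2 ++ pL 5 3 ++ [4] ++ [5] ++ pL 6 (-1) ++ pL 5 0 ++ dL 4 1 ++
    pL 5 2 ++ dL 4 3 ++ [5] ++ pL 6 k1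

/-- Moves for the longest prefix and `k1 = 3`. -/
def e8cert : List ℕ :=
  [18, 19, 17, 19, 16, 15, 14, 13, 20, 25, 24, 23, 22, 21, 19, 21, 17, 16, 15, 19, 17, 26,
    25, 24, 22, 21, 20, 22, 30, 29, 28, 27, 26, 25, 24, 40, 39, 41, 42, 40, 42, 38, 40, 41,
    37, 36, 35, 34, 33, 32, 31, 30, 29, 28, 27, 26, 25, 23, 25, 26, 27, 28, 29, 30, 31, 21,
    23, 19, 21, 22, 23, 25, 26, 27, 18, 16, 18, 20, 14, 16, 17, 18, 22, 20, 22, 21, 23, 24,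
    25, 26, 12, 14, 15, 16, 17, 20, 18, 20, 19, 11, 10, 9, 8, 7, 6, 5, 4, 3, 2, 0]

theorem E8_f9 (G : Type*) [Group G] (x : ℤ → G)
    (hsq : ∀ i : ℤ, (-1) ≤ i → i ≤ 6 → x i ^ 2 = 1)
    (hbraid : ∀ i : ℤ, (-1) ≤ i → i ≤ 3 → x (i+1) * x i * x (i+1) = x i * x (i+1) * x i)
    (h53 : x 5 * x 3 * x 5 = x 3 * x 5 * x 3)
    (h64 : x 6 * x 4 * x 6 = x 4 * x 6 * x 4)
    (hcomm : ∀ i j : ℤ, (-1) ≤ j → j + 1 < i → i ≤ 4 → x i * x j = x j * x i)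
    (hcomm5 : ∀ i : ℤ, (-1) ≤ i → i ≤ 6 → i ≠ 3 → i ≠ 5 → x 5 * x i = x i * x 5)
    (hcomm6 : ∀ i : ℤ, (-1) ≤ i → i ≤ 6 → i ≠ 4 → i ≠ 6 → x 6 * x i = x i * x 6) :
    ∀ i1 i2 k1 : ℤ, -1 ≤ i1 → i1 < i2 → i2 ≤ 1 → -1 ≤ k1 → k1 ≤ 3 →
      primProd x 6 i1 * primProd x 5 i2 * descProd x 4 2 * primProd x 5 3 * x 4 * x 5 *
        primProd x 6 (-1) * primProd x 5 0 * descProd x 4 1 * primProd x 5 2 * descProd x 4 3 *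
        x 5 * primProd x 6 k1 * x 5 =
      x 4 * primProd x 6 i1 * primProd x 5 i2 * descProd x 4 2 * primProd x 5 3 * x 4 * x 5 *
        primProd x 6 (-1) * primProd x 5 0 * descProd x 4 1 * primProd x 5 2 * descProd x 4 3 *
        x 5 * primProd x 6 k1 := by
  have hc : ∀ a b, e8comm a b → x a * x b = x b * x a := by
    rintro a b (⟨h1, h2, h3⟩ | ⟨h1, h2, h3⟩ | ⟨rfl, h1, h2, h3, h4⟩ | ⟨rfl, h1, h2, h3, h4⟩ |
      ⟨rfl, h1, h2, h3, h4⟩ | ⟨rfl, h1, h2, h3, h4⟩)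
    · exact hcomm a b h1 h2 h3
    · exact (hcomm b a h1 h2 h3).symm
    · exact hcomm5 b h1 h2 h3 h4
    · exact (hcomm5 a h1 h2 h3 h4).symm
    · exact hcomm6 b h1 h2 h3 h4
    · exact (hcomm6 a h1 h2 h3 h4).symm
  have ha : ∀ a b, e8adj a b → x a * x b * x a = x b * x a * x b := by
    rintro a b (⟨rfl, h1, h2⟩ | ⟨rfl, h1, h2⟩ | ⟨rfl, rfl⟩ | ⟨rfl, rfl⟩ | ⟨rfl, rfl⟩ | ⟨rfl, rfl⟩)
    · exact hbraid b h1 h2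
    · exact (hbraid a h1 h2).symm
    · exact h53
    · exact h53.symm
    · exact h64
    · exact h64.symm
  intro i1 i2 k1 h1 h2 h3 h4 h5
  suffices h : ∃ m : List ℕ,
      m.foldl (fun w n => e8move n w) (e8w i1 i2 k1 ++ [5]) = 4 :: e8w i1 i2 k1 by
    obtain ⟨m, hm⟩ := h
    have h := e8moves_prod x hc ha m (e8w i1 i2 k1 ++ [5])
    rw [hm] at h
    simp only [e8w, List.map_append, List.prod_append, List.map_cons, List.prod_cons,
      List.map_nil, List.prod_nil, pL_prod, dL_prod, mul_one] at h
    rw [← h]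
    simp only [mul_assoc]
  have hi : (i1 = -1 ∧ i2 = 0) ∨ (i1 = -1 ∧ i2 = 1) ∨ (i1 = 0 ∧ i2 = 1) := by omega
  have hk : k1 = -1 ∨ k1 = 0 ∨ k1 = 1 ∨ k1 = 2 ∨ k1 = 3 := by omega
  -- slide the last letter past the tail, then use the certificate
  refine ⟨(List.range' ((if i2 = 0 then 44 else if i1 = -1 then 43 else 42)) (3 - k1).toNat).reverse ++
    ?_, ?_⟩
  · exact if i2 = 0 then e8cert else if i1 = -1 then (e8cert.map (· - 1)).take 108 ++ [0] else (e8cert.map (· - 2)).take 107 ++ [0]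
  · rcases hi with ⟨rfl, rfl⟩ | ⟨rfl, rfl⟩ | ⟨rfl, rfl⟩ <;>
      rcases hk with rfl | rfl | rfl | rfl | rfl <;> decide +kernel
end
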